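/- There is a constant q₀ depending only on n such that the following holds whenever q ≥ q₀: for every nonempty J ⊆ [n] with 1 ∉ J and n ∉ J, every EKR-set of flags of type J has cardinality strictly less than N_J/(q^n + 1), where N_J is the total number of flags of type J. -/

import Mathlib

open scoped Classical

open Module

section Defs

variable {F V : Type} [Field F] [AddCommGroup V] [Module F V]

/-- The orthogonal complement of a subspace with respect to a bilinear form. -/
def bperp (B : V →ₗ[F] V →ₗ[F] F) (W : Submodule F V) : Submodule F V :=
  ⨅ w ∈ W, LinearMap.ker (B w)

/-- A subspace is totally isotropic for `B`. -/
def IsTotIso (B : V →ₗ[F] V →ₗ[F] F) (W : Submodule F V) : Prop :=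
  ∀ u ∈ W, ∀ w ∈ W, B u w = 0

/-- `B` is an alternating form. -/
def IsAltForm (B : V →ₗ[F] V →ₗ[F] F) : Prop := ∀ v, B v v = 0

/-- `B` is nondegenerate. -/
def NondegForm (B : V →ₗ[F] V →ₗ[F] F) : Prop := ∀ v, (∀ w, B v w = 0) → v = 0

/-- A flag of type `J` of totally isotropic subspaces: entries outside `J` are `⊥`. -/
structure SFlag (B : V →ₗ[F] V →ₗ[F] F) (J : Finset ℕ) where
  space : ℕ → Submodule F V
  isotropic : ∀ i ∈ J, IsTotIso B (space i)
  finrank_eq : ∀ i ∈ J, Module.finrank F (space i) = i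
  mono : ∀ i ∈ J, ∀ j ∈ J, i ≤ j → space i ≤ space j
  eq_bot : ∀ i, i ∉ J → space i = ⊥

/-- Two flags of type `J` are opposite. -/
def FlagOpp {B : V →ₗ[F] V →ₗ[F] F} {J : Finset ℕ} (C C' : SFlag B J) : Prop :=
  ∀ i ∈ J, bperp B (C.space i) ⊓ C'.space i = ⊥

/-- An EKR-set of flags of type `J`: no two members are opposite. -/
def IsEKRFlags {B : V →ₗ[F] V →ₗ[F] F} {J : Finset ℕ} (𝓕 : Set (SFlag B J)) : Prop :=
  ∀ C ∈ 𝓕, ∀ C' ∈ 𝓕, ¬ FlagOpp C C'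

/-- Two subspaces are opposite. -/
def SpaceOpp (B : V →ₗ[F] V →ₗ[F] F) (S T : Submodule F V) : Prop :=
  bperp B S ⊓ T = ⊥

/-- An EKR-set of totally isotropic `s`-spaces: no two members are opposite. -/
def IsEKRSpaces (B : V →ₗ[F] V →ₗ[F] F) (s : ℕ) (𝓕 : Set (Submodule F V)) : Prop :=
  (∀ S ∈ 𝓕, IsTotIso B S ∧ Module.finrank F S = s) ∧
    ∀ S ∈ 𝓕, ∀ T ∈ 𝓕, ¬ SpaceOpp B S T

/-- An `s`-space `S` is heavy with respect to a set `𝓕` of flags: every flag whose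
`s`-th entry equals `S` belongs to `𝓕`. -/
def Heavy {B : V →ₗ[F] V →ₗ[F] F} {J : Finset ℕ} (𝓕 : Set (SFlag B J)) (s : ℕ)
    (S : Submodule F V) : Prop :=
  ∀ C : SFlag B J, C.space s = S → C ∈ 𝓕

end Defs

/-- `z_k = ∏_{i=1}^k (q^i-1)/(q-1)`. -/
noncomputable def zpol (q k : ℕ) : ℝ :=
  ∏ i ∈ Finset.Icc 1 k, ((q : ℝ) ^ i - 1) / ((q : ℝ) - 1)

/-- The Gaussian binomial coefficient `[m choose k]_q` as a real number. -/
noncomputable def gaussq (q m k : ℕ) : ℝ :=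
  ∏ i ∈ Finset.Icc 1 k, ((q : ℝ) ^ (m - k + i) - 1) / ((q : ℝ) ^ i - 1)

/-- `Φ_m^s` in `PS(n,1,q)`: the number of totally isotropic `s`-spaces containing a
fixed totally isotropic `m`-space. -/
noncomputable def PhiP (q n m s : ℕ) : ℝ :=
  gaussq q (n - m) (s - m) * ∏ i ∈ Finset.Icc 1 (s - m), ((q : ℝ) ^ (n - m + 1 - i) + 1)

/-! ### Linear algebra -/
section Geo
variable {F V : Type} [Field F] [AddCommGroup V] [Module F V]

lemma mem_bperp_iff {B : V →ₗ[F] V →ₗ[F] F} {W : Submodule F V} {x : V} :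
    x ∈ bperp B W ↔ ∀ w ∈ W, B w x = 0 := by
  simp [bperp]

lemma alt_swap {B : V →ₗ[F] V →ₗ[F] F} (hB : IsAltForm B) (u v : V) : B u v = - B v u := by
  have h := hB (u + v)
  simp only [map_add, LinearMap.add_apply, hB u, hB v] at h
  have : B u v + B v u = 0 := by linear_combination h
  exact eq_neg_of_add_eq_zero_left this

lemma alt_zero_comm {B : V →ₗ[F] V →ₗ[F] F} (hB : IsAltForm B) {u v : V} :
    B u v = 0 ↔ B v u = 0 := by
  rw [alt_swap hB u v, neg_eq_zero]

lemma finrank_bperp [FiniteDimensional F V] {B : V →ₗ[F] V →ₗ[F] F} (hB : IsAltForm B)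
    (hN : NondegForm B) (W : Submodule F V) :
    finrank F (bperp B W) + finrank F W = finrank F V := by
  have hrefl : LinearMap.BilinForm.IsRefl B := fun x y h => (alt_zero_comm hB).1 h
  have hnd : LinearMap.BilinForm.Nondegenerate B := by
    refine ⟨fun v h => hN v h, fun v h => hN v fun w => (alt_zero_comm hB).1 (h w)⟩
  have h1 := LinearMap.BilinForm.finrank_orthogonal hnd W
  have h2 : bperp B W = LinearMap.BilinForm.orthogonal B W := by
    ext x
    rw [mem_bperp_iff, LinearMap.BilinForm.mem_orthogonal_iff]
  have h3 := Submodule.finrank_le W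
  rw [h2, h1]
  omega

lemma bperp_bperp [FiniteDimensional F V] {B : V →ₗ[F] V →ₗ[F] F} (hB : IsAltForm B)
    (hN : NondegForm B) (W : Submodule F V) : bperp B (bperp B W) = W := by
  symm
  apply Submodule.eq_of_le_of_finrank_eq
  · intro x hx
    rw [mem_bperp_iff]
    intro w hw
    rw [mem_bperp_iff] at hw
    exact (alt_zero_comm hB).1 (hw x hx)
  · have h1 := finrank_bperp hB hN W
    have h2 := finrank_bperp hB hN (bperp B W)
    omega

/-- The transvection `x ↦ x + a B(x,u) u`. -/
lemma exists_transvection {B : V →ₗ[F] V →ₗ[F] F} (hB : IsAltForm B) (u : V) (a : F) :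
    ∃ g : V ≃ₗ[F] V, (∀ x y, B (g x) (g y) = B x y) ∧ ∀ x, g x = x + (a * B x u) • u := by
  let T : F → (V →ₗ[F] V) := fun a =>
    LinearMap.id + a • ((B.flip u).smulRight u)
  have hT : ∀ a x, T a x = x + (a * B x u) • u := by
    intro a x
    simp [T, mul_smul]
  have hinv : ∀ a x, T (-a) (T a x) = x := by
    intro a x
    rw [hT, hT]
    simp only [map_add, map_smul, LinearMap.add_apply, LinearMap.smul_apply, hB u]
    simp
  refine ⟨LinearEquiv.ofLinear (T a) (T (-a)) ?_ ?_, ?_, ?_⟩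
  · ext x
    have := hinv (-a) x
    rw [neg_neg] at this
    simpa using this
  · ext x
    simpa using hinv a x
  · intro x y
    simp only [LinearEquiv.ofLinear_apply, hT]
    simp only [map_add, map_smul, LinearMap.add_apply, LinearMap.smul_apply, hB u, smul_eq_mul]
    rw [alt_swap hB u y]
    ring
  · intro x
    simp [hT]

lemma trans_step1 {B : V →ₗ[F] V →ₗ[F] F} (hB : IsAltForm B) (T : Submodule F V) {v w : V}
    (hv : v ∈ bperp B T) (hw : w ∈ bperp B T) (hvw : B v w ≠ 0) :
    ∃ g : V ≃ₗ[F] V, (∀ x y, B (g x) (g y) = B x y) ∧ (∀ t ∈ T, g t = t) ∧ g v = w := by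
  obtain ⟨g, hg, hg'⟩ := exists_transvection hB (w - v) (B v w)⁻¹
  rw [mem_bperp_iff] at hv hw
  refine ⟨g, hg, ?_, ?_⟩
  · intro t ht
    rw [hg', map_sub, hv t ht, hw t ht]
    simp
  · rw [hg', map_sub, hB v, sub_zero, inv_mul_cancel₀ hvw]
    simp

lemma trans_step [FiniteDimensional F V] {B : V →ₗ[F] V →ₗ[F] F} (hB : IsAltForm B)
    (hN : NondegForm B) (T : Submodule F V) {v w : V}
    (hv : v ∈ bperp B T) (hw : w ∈ bperp B T) (hv' : v ∉ T) (hw' : w ∉ T) :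
    ∃ g : V ≃ₗ[F] V, (∀ x y, B (g x) (g y) = B x y) ∧ (∀ t ∈ T, g t = t) ∧ g v = w := by
  have key : ∀ x, x ∉ T → ∃ z ∈ bperp B T, B x z ≠ 0 := by
    intro x hx
    by_contra! hcon
    apply hx
    rw [← bperp_bperp hB hN T, mem_bperp_iff]
    intro z hz
    exact (alt_zero_comm hB).1 (hcon z hz)
  have : ∃ z ∈ bperp B T, B v z ≠ 0 ∧ B w z ≠ 0 := by
    obtain ⟨z1, hz1, h1⟩ := key v hv'
    obtain ⟨z2, hz2, h2⟩ := key w hw'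
    by_cases h3 : B w z1 = 0
    · by_cases h4 : B v z2 = 0
      · refine ⟨z1 + z2, Submodule.add_mem _ hz1 hz2, ?_, ?_⟩
        · simpa [h4] using h1
        · simpa [h3] using h2
      · exact ⟨z2, hz2, h4, h2⟩
    · exact ⟨z1, hz1, h1, h3⟩
  obtain ⟨z, hz, h1, h2⟩ := this
  obtain ⟨g, hg, hgT, hgv⟩ := trans_step1 hB T hv hz h1
  have h2' : B z w ≠ 0 := fun h => h2 ((alt_zero_comm hB).1 h)
  obtain ⟨g', hg', hgT', hgv'⟩ := trans_step1 hB T hz hw h2'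
  refine ⟨g.trans g', ?_, ?_, ?_⟩
  · intro x y; simp [hg, hg']
  · intro t ht; simp [hgT t ht, hgT' t ht]
  · simp [hgv, hgv']

lemma span_le_bperp {B : V →ₗ[F] V →ₗ[F] F} {s : Set V} {x : V} :
    x ∈ bperp B (Submodule.span F s) ↔ ∀ w ∈ s, B w x = 0 := by
  rw [mem_bperp_iff]
  constructor
  · intro h w hw; exact h w (Submodule.subset_span hw)
  · intro h w hw
    have : Submodule.span F s ≤ LinearMap.ker (B.flip x) := by
      rw [Submodule.span_le]
      intro y hy
      simpa using h y hy
    simpa using this hw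

lemma trans1 [FiniteDimensional F V] {B : V →ₗ[F] V →ₗ[F] F} (hB : IsAltForm B)
    (hN : NondegForm B) {u u' : V} (hu : u ≠ 0) (hu' : u' ≠ 0) :
    ∃ g : V ≃ₗ[F] V, (∀ x y, B (g x) (g y) = B x y) ∧ g u = u' := by
  obtain ⟨g, h1, -, h2⟩ := trans_step hB hN ⊥ (v := u) (w := u')
    (by simp [mem_bperp_iff]) (by simp [mem_bperp_iff]) (by simpa using hu) (by simpa using hu')
  exact ⟨g, h1, h2⟩

lemma trans2 [FiniteDimensional F V] {B : V →ₗ[F] V →ₗ[F] F} (hB : IsAltForm B)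
    (hN : NondegForm B) {u u' v v' : V} (hu : u ≠ 0) (hu' : u' ≠ 0)
    (hv : B u v = 0) (hv' : B u' v' = 0) (hvs : v ∉ Submodule.span F {u})
    (hvs' : v' ∉ Submodule.span F {u'}) :
    ∃ g : V ≃ₗ[F] V, (∀ x y, B (g x) (g y) = B x y) ∧ g u = u' ∧ g v = v' := by
  obtain ⟨g, h1, h2⟩ := trans1 hB hN hu hu'
  have e1 : g v ∉ Submodule.span F {u'} := by
    rw [← h2]
    intro h
    apply hvs
    rw [Submodule.mem_span_singleton] at h ⊢
    obtain ⟨a, ha⟩ := h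
    exact ⟨a, g.injective (by rw [map_smul, ha])⟩
  obtain ⟨g', h1', h2', h3'⟩ := trans_step hB hN (Submodule.span F {u'}) (v := g v) (w := v')
    (by rw [span_le_bperp]; intro w hw; rw [Set.mem_singleton_iff] at hw
        rw [hw, ← h2, h1, hv])
    (by rw [span_le_bperp]; intro w hw; rw [Set.mem_singleton_iff] at hw
        rw [hw, hv']) e1 hvs'
  refine ⟨g.trans g', ?_, ?_, ?_⟩
  · intro x y; simp [h1, h1']
  · simp [h2, h2' u' (Submodule.mem_span_singleton_self u')]
  · simp [h3']

lemma trans3 [FiniteDimensional F V] {B : V →ₗ[F] V →ₗ[F] F} (hB : IsAltForm B)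
    (hN : NondegForm B) {u u' v v' w w' : V} (hu : u ≠ 0) (hu' : u' ≠ 0)
    (hv : B u v = 0) (hv' : B u' v' = 0) (hvs : v ∉ Submodule.span F {u})
    (hvs' : v' ∉ Submodule.span F {u'})
    (huw : B u w = 0) (huw' : B u' w' = 0) (hvw : B v w = 0) (hvw' : B v' w' = 0)
    (hws : w ∉ Submodule.span F {u, v}) (hws' : w' ∉ Submodule.span F {u', v'}) :
    ∃ g : V ≃ₗ[F] V, (∀ x y, B (g x) (g y) = B x y) ∧ g u = u' ∧ g v = v' ∧ g w = w' := by
  obtain ⟨g, h1, h2, h3⟩ := trans2 hB hN hu hu' hv hv' hvs hvs'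
  have e1 : g w ∉ Submodule.span F {u', v'} := by
    rw [← h2, ← h3]
    intro h
    apply hws
    rw [Submodule.mem_span_pair] at h ⊢
    obtain ⟨a, b, ha⟩ := h
    exact ⟨a, b, g.injective (by rw [map_add, map_smul, map_smul, ha])⟩
  obtain ⟨g', h1', h2', h3'⟩ := trans_step hB hN (Submodule.span F {u', v'}) (v := g w) (w := w')
    (by rw [span_le_bperp]; intro x hx
        rcases hx with hx | hx
        · rw [hx, ← h2, h1, huw]
        · rw [Set.mem_singleton_iff] at hx; rw [hx, ← h3, h1, hvw])
    (by rw [span_le_bperp]; intro x hx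
        rcases hx with hx | hx
        · rw [hx, huw']
        · rw [Set.mem_singleton_iff] at hx; rw [hx, hvw']) e1 hws'
  refine ⟨g.trans g', ?_, ?_, ?_, ?_⟩
  · intro x y; simp [h1, h1']
  · simp [h2, h2' u' (Submodule.subset_span (by simp))]
  · simp [h3, h2' v' (Submodule.subset_span (by simp))]
  · simp [h3']

/-- image of a flag under an isometry -/
def mapFlag {B : V →ₗ[F] V →ₗ[F] F} {J : Finset ℕ} (g : V ≃ₗ[F] V)
    (hg : ∀ x y, B (g x) (g y) = B x y) (C : SFlag B J) : SFlag B J where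
  space i := (C.space i).map (g : V →ₗ[F] V)
  isotropic i hi := by
    rintro _ ⟨u, hu, rfl⟩ _ ⟨w, hw, rfl⟩
    have := C.isotropic i hi u hu w hw
    simpa [hg] using this
  finrank_eq i hi :=
    (LinearEquiv.finrank_map_eq g (C.space i)).trans (C.finrank_eq i hi)
  mono i hi j hj hij := Submodule.map_mono (C.mono i hi j hj hij)
  eq_bot i hi := by rw [C.eq_bot i hi, Submodule.map_bot]

lemma SFlag.ext_space {B : V →ₗ[F] V →ₗ[F] F} {J : Finset ℕ} {C D : SFlag B J}
    (h : C.space = D.space) : C = D := by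
  cases C; cases D; simp at h; subst h; rfl

lemma mapFlag_injective {B : V →ₗ[F] V →ₗ[F] F} {J : Finset ℕ} (g : V ≃ₗ[F] V)
    (hg : ∀ x y, B (g x) (g y) = B x y) :
    Function.Injective (mapFlag (J := J) g hg) := by
  intro C D h
  apply SFlag.ext_space
  funext i
  have h' := congrArg (fun E => SFlag.space E i) h
  exact Submodule.map_injective_of_injective g.injective h'

lemma finite_SFlag [Finite V] (B : V →ₗ[F] V →ₗ[F] F) (J : Finset ℕ) : Finite (SFlag B J) := by
  haveI : Finite (Submodule F V) := 
    Finite.of_injective (fun W : Submodule F V => (W : Set V)) SetLike.coe_injective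
  refine Finite.of_injective (fun C : SFlag B J => fun i : J => C.space i) ?_
  intro C D h
  apply SFlag.ext_space
  funext i
  by_cases hi : i ∈ J
  · exact congrFun h ⟨i, hi⟩
  · rw [C.eq_bot i hi, D.eq_bot i hi]

lemma exists_chain [FiniteDimensional F V] {B : V →ₗ[F] V →ₗ[F] F} (hB : IsAltForm B)
    (hN : NondegForm B) (n : ℕ) (hV : finrank F V = 2 * n) (k : ℕ) (hk : k ≤ n) :
    ∃ W : ℕ → Submodule F V, (∀ i ≤ k, IsTotIso B (W i) ∧ finrank F (W i) = i) ∧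
      ∀ i j, i ≤ j → j ≤ k → W i ≤ W j := by
  induction k with
  | zero =>
    refine ⟨fun _ => ⊥, ?_, fun i j _ _ => le_rfl⟩
    intro i hi
    obtain rfl : i = 0 := by omega
    refine ⟨?_, by simp⟩
    intro u hu w hw
    simp only [Submodule.mem_bot] at hu
    simp [hu]
  | succ k ih =>
    obtain ⟨W, h1, h2⟩ := ih (by omega)
    have hlt : ∃ v ∈ bperp B (W k), v ∉ W k := by
      by_contra! hcon
      have h3 : finrank F (bperp B (W k)) ≤ finrank F (W k) := Submodule.finrank_mono hcon
      have h4 := finrank_bperp hB hN (W k)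
      have h5 := (h1 k le_rfl).2
      omega
    obtain ⟨v, hv, hv'⟩ := hlt
    rw [mem_bperp_iff] at hv
    have hv0 : v ≠ 0 := fun h => hv' (h ▸ Submodule.zero_mem _)
    refine ⟨fun i => if i ≤ k then W i else W k ⊔ Submodule.span F {v}, ?_, ?_⟩
    · intro i hi
      by_cases hik : i ≤ k
      · have e : (if i ≤ k then W i else W k ⊔ Submodule.span F {v}) = W i := if_pos hik
        beta_reduce; rw [e]; exact h1 i hik
      · have e : (if i ≤ k then W i else W k ⊔ Submodule.span F {v}) = W k ⊔ Submodule.span F {v} :=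
          if_neg hik
        beta_reduce; rw [e]
        obtain rfl : i = k + 1 := by omega
        constructor
        · intro x hx y hy
          rw [Submodule.mem_sup] at hx hy
          obtain ⟨x1, hx1, x2, hx2, rfl⟩ := hx
          obtain ⟨y1, hy1, y2, hy2, rfl⟩ := hy
          rw [Submodule.mem_span_singleton] at hx2 hy2
          obtain ⟨a, rfl⟩ := hx2
          obtain ⟨b, rfl⟩ := hy2
          have e1 := (h1 k le_rfl).1 x1 hx1 y1 hy1
          have e2 := hv x1 hx1
          have e3 := (alt_zero_comm hB).1 (hv y1 hy1)
          simp [e1, e2, e3, hB v]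
        · have := Submodule.finrank_sup_add_finrank_inf_eq (W k) (Submodule.span F {v})
          have hinf : W k ⊓ Submodule.span F {v} = ⊥ := by
            rw [eq_bot_iff]
            rintro x ⟨hx1, hx2⟩
            obtain ⟨a, rfl⟩ := Submodule.mem_span_singleton.1 hx2
            by_cases ha : a = 0
            · simp [ha]
            · exact absurd ((Submodule.smul_mem_iff _ ha).1 hx1) hv'
          rw [hinf, finrank_bot, finrank_span_singleton hv0, (h1 k le_rfl).2] at this
          omega
    · intro i j hij hj
      by_cases hjk : j ≤ k
      · simp only [hjk, hij.trans hjk, if_true]; exact h2 i j hij hjk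
      · by_cases hik : i ≤ k
        · simp only [hjk, hik, if_true, if_false]
          exact (h2 i k hik le_rfl).trans le_sup_left
        · simp only [hjk, hik, if_false]; exact le_rfl

lemma nonempty_SFlag [FiniteDimensional F V] {B : V →ₗ[F] V →ₗ[F] F} (hB : IsAltForm B)
    (hN : NondegForm B) (n : ℕ) (hV : finrank F V = 2 * n) (J : Finset ℕ)
    (hJ : J ⊆ Finset.Icc 1 n) : Nonempty (SFlag B J) := by
  obtain ⟨W, h1, h2⟩ := exists_chain hB hN n hV n le_rfl
  have hJ' : ∀ i ∈ J, i ≤ n := fun i hi => (Finset.mem_Icc.1 (hJ hi)).2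
  refine ⟨⟨fun i => if i ∈ J then W i else ⊥, ?_, ?_, ?_, ?_⟩⟩
  · intro i hi; simp only [hi, if_true]; exact (h1 i (hJ' i hi)).1
  · intro i hi
    have e : (if i ∈ J then W i else ⊥) = W i := if_pos hi
    beta_reduce; rw [e]; exact (h1 i (hJ' i hi)).2
  · intro i hi j hj hij; simp only [hi, hj, if_true]; exact h2 i j hij (hJ' j hj)
  · intro i hi; simp [hi]

end Geo

/-! ### Analytic core -/
section Core
open Finset

lemma core_step2 {V Ω : Type} [Fintype V] [Fintype Ω] (z0 : V) (𝓕 : Finset Ω) (I : Ω → V → ℝ)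
    (P Q K N1 f : ℝ) (hP : 2 ≤ P) (hK : 1 ≤ K) (hQ : 0 < Q)
    (hN1 : 0 < N1) (hf : f = #𝓕)
    (hcard : ∑ v : V, (if v = z0 then (0:ℝ) else 1) = P ^ 2 - 1)
    (hI0 : ∀ C, I C z0 = 0)
    (hrow : ∀ C, ∑ v, I C v = K - 1)
    (G0 : ∀ z : V → ℝ, z z0 = 0 → ∑ v, z v = 0 →
      ∑ C, (∑ v, I C v * z v) ^ 2 ≤ Q * N1 * ∑ v, z v ^ 2) :
    ∑ v, (∑ C ∈ 𝓕, I C v) ^ 2 ≤ Q * N1 * f + 2 * K ^ 2 * f ^ 2 / P ^ 2 := by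
  set X : V → ℝ := fun v => ∑ C ∈ 𝓕, I C v with hX
  have hX0 : X z0 = 0 := by simp [hX, hI0]
  have hXs : ∑ v, X v = (K - 1) * f := by
    simp only [hX]; rw [sum_comm]; simp [hrow, hf]; ring
  have hP1 : 0 < P ^ 2 - 1 := by nlinarith
  set m : ℝ := (K - 1) * f / (P ^ 2 - 1) with hm
  have hm' : m * (P ^ 2 - 1) = (K - 1) * f := by rw [hm]; field_simp
  set d : V → ℝ := fun v => if v = z0 then (0:ℝ) else 1 with hd
  have hdX : ∀ v, d v * X v = X v := by
    intro v; by_cases hv : v = z0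
    · subst hv; rw [hX0]; simp
    · simp [hd, hv]
  have hdd : ∀ v, d v * d v = d v := by
    intro v; by_cases hv : v = z0 <;> simp [hd, hv]
  set z : V → ℝ := fun v => X v - m * d v with hz
  have hz0 : z z0 = 0 := by simp [hz, hX0, hd]
  have hzs : ∑ v, z v = 0 := by
    simp only [hz]; rw [sum_sub_distrib, ← mul_sum, hcard, hXs, hm']; ring
  have hz2 : ∑ v, z v ^ 2 = ∑ v, X v ^ 2 - m * ((K - 1) * f) := by
    have : ∀ v, z v ^ 2 = X v ^ 2 - 2 * m * X v + m ^ 2 * d v := by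
      intro v; simp only [hz]
      linear_combination (-2 * m) * hdX v + m ^ 2 * hdd v
    simp_rw [this]
    rw [sum_add_distrib, sum_sub_distrib, ← mul_sum, ← mul_sum, hXs, hcard]
    linear_combination m * hm'
  have hXz : ∑ C ∈ 𝓕, ∑ v, I C v * z v = ∑ v, z v ^ 2 := by
    rw [sum_comm]
    have : ∀ v, ∑ C ∈ 𝓕, I C v * z v = z v ^ 2 + m * z v := by
      intro v
      rw [← sum_mul]
      have e : d v * z v = z v := by
        simp only [hz]; linear_combination hdX v - m * hdd v
      change X v * z v = _
      have : X v = z v + m * d v := by simp [hz]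
      rw [this]; linear_combination m * e
    simp_rw [this]
    rw [sum_add_distrib, ← mul_sum, hzs]; ring
  have hCS : (∑ C ∈ 𝓕, ∑ v, I C v * z v) ^ 2 ≤ f * ∑ C ∈ 𝓕, (∑ v, I C v * z v) ^ 2 := by
    rw [hf]; exact sq_sum_le_card_mul_sum_sq
  have hsub : ∑ C ∈ 𝓕, (∑ v, I C v * z v) ^ 2 ≤ ∑ C, (∑ v, I C v * z v) ^ 2 :=
    sum_le_sum_of_subset_of_nonneg (subset_univ _) (fun _ _ _ => sq_nonneg _)
  have hG := G0 z hz0 hzs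
  have hf0 : 0 ≤ f := by rw [hf]; positivity
  rw [hXz] at hCS
  set Z := ∑ v, z v ^ 2 with hZ
  have hZ0 : 0 ≤ Z := sum_nonneg fun _ _ => sq_nonneg _
  have h1 : Z ^ 2 ≤ f * (Q * N1 * Z) := hCS.trans (mul_le_mul_of_nonneg_left (hsub.trans hG) hf0)
  have h2 : Z ≤ Q * N1 * f := by
    rcases hZ0.eq_or_lt with h | h
    · rw [← h]; positivity
    · by_contra! hc
      nlinarith
  have h3 : m * ((K - 1) * f) ≤ 2 * K ^ 2 * f ^ 2 / P ^ 2 := by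
    rw [hm, div_mul_eq_mul_div, div_le_div_iff₀ hP1 (by positivity)]
    have e1 : (K - 1) * f * ((K - 1) * f) ≤ K ^ 2 * f ^ 2 := by
      have : (K-1)^2 ≤ K^2 := by nlinarith
      nlinarith [mul_le_mul_of_nonneg_right this (sq_nonneg f)]
    have e2 : P ^ 2 ≤ 2 * (P ^ 2 - 1) := by nlinarith
    have e3 : 0 ≤ K ^ 2 * f ^ 2 := by positivity
    calc _ ≤ K ^ 2 * f ^ 2 * P ^ 2 := mul_le_mul_of_nonneg_right e1 (by positivity)
      _ ≤ K ^ 2 * f ^ 2 * (2 * (P ^ 2 - 1)) := mul_le_mul_of_nonneg_left e2 e3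
      _ = _ := by ring
  linarith

lemma core_Mv {V Ω : Type} [Fintype V] [Fintype Ω] (𝓕 : Finset Ω) (I : Ω → V → ℝ)
    (Q K N2 c τ : ℝ) (hQ : 0 < Q) (hc : 0 < c) (hN2 : 0 ≤ N2) (hτc : τ ≤ c / 8)
    (hI : ∀ C v, I C v = 0 ∨ I C v = 1)
    (v : V) (e p : V → ℝ) (he : ∀ w, e w = 0 ∨ e w = 1) (hep : ∀ w, e w ≤ p w)
    (hEs : 0 < ∑ w, e w)
    (hIe : ∀ C, I C v = 1 → ∑ w, I C w * e w = K - Q)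
    (hIe' : ∀ C, I C v = 1 → ∑ w, I C w * (1 - e w) ≤ Q)
    (G1 : ∀ z : V → ℝ, (∀ w, e w * z w = z w) → ∑ w, z w = 0 →
      ∑ C, I C v * (∑ w, I C w * z w) ^ 2 ≤ 2 * Q ^ 2 * N2 * ∑ w, z w ^ 2)
    (h : V → ℝ) (h0 : ∀ w, 0 ≤ h w) (hτ : ∀ w, h w ≤ τ)
    (hμ : (K - Q) * ((∑ w, e w * h w) / ∑ w, e w) ≤ c * Q / 8) :
    ∑ C ∈ 𝓕 with c * Q / 2 ≤ ∑ w, I C w * h w, I C v ≤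
      128 / c ^ 2 * N2 * ∑ w, p w * h w ^ 2 := by
  set m := (∑ w, e w * h w) / ∑ w, e w with hm
  have hm' : m * ∑ w, e w = ∑ w, e w * h w := by rw [hm]; field_simp
  set z : V → ℝ := fun w => e w * (h w - m) with hz
  have hee : ∀ w, e w * e w = e w := by intro w; rcases he w with h | h <;> simp [h]
  have hz1 : ∀ w, e w * z w = z w := by
    intro w; simp only [hz]; linear_combination (h w - m) * hee w
  have hzs : ∑ w, z w = 0 := by
    have : ∀ w, z w = e w * h w - m * e w := by intro w; simp only [hz]; ring
    simp_rw [this]; rw [sum_sub_distrib, ← mul_sum, hm']; ring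
  have hz2 : ∑ w, z w ^ 2 ≤ ∑ w, p w * h w ^ 2 := by
    have : ∀ w, z w ^ 2 = e w * h w ^ 2 - 2 * m * (e w * h w) + m ^ 2 * e w := by
      intro w; simp only [hz]; linear_combination (h w - m) ^ 2 * hee w
    have e1 : ∑ w, z w ^ 2 = ∑ w, e w * h w ^ 2 - m * (m * ∑ w, e w) := by
      simp_rw [this]
      rw [sum_add_distrib, sum_sub_distrib, ← mul_sum, ← mul_sum]
      linear_combination (2 * m) * hm'
    have e2 : 0 ≤ m * (m * ∑ w, e w) := by
      rw [← mul_assoc]; exact mul_nonneg (mul_self_nonneg m) hEs.le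
    have e3 : ∑ w, e w * h w ^ 2 ≤ ∑ w, p w * h w ^ 2 :=
      sum_le_sum fun w _ => mul_le_mul_of_nonneg_right (hep w) (sq_nonneg _)
    linarith
  have hlow : ∀ C, I C v = 1 → c * Q / 2 ≤ ∑ w, I C w * h w →
      c * Q / 8 ≤ ∑ w, I C w * z w := by
    intro C hC hg
    have e1 : ∑ w, I C w * z w = ∑ w, I C w * h w - ∑ w, (I C w * (1 - e w)) * h w
        - m * ∑ w, I C w * e w := by
      rw [mul_sum, ← sum_sub_distrib, ← sum_sub_distrib]
      apply sum_congr rfl; intro w _; simp only [hz]; ring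
    have e2 : ∑ w, (I C w * (1 - e w)) * h w ≤ τ * Q := by
      have hnn : ∀ w, 0 ≤ I C w * (1 - e w) := by
        intro w; rcases hI C w with h | h <;> rcases he w with h' | h' <;> simp [h, h']
      have hτ0 : 0 ≤ τ := (h0 v).trans (hτ v)
      calc _ ≤ ∑ w, (I C w * (1 - e w)) * τ :=
            sum_le_sum fun w _ => mul_le_mul_of_nonneg_left (hτ w) (hnn w)
        _ = τ * ∑ w, I C w * (1 - e w) := by rw [← sum_mul]; ring
        _ ≤ _ := mul_le_mul_of_nonneg_left (hIe' C hC) hτ0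
    rw [e1, hIe C hC]
    have e3 : τ * Q ≤ c / 8 * Q := mul_le_mul_of_nonneg_right hτc hQ.le
    nlinarith
  have hG := G1 z hz1 hzs
  have hpt : ∑ C ∈ 𝓕 with c * Q / 2 ≤ ∑ w, I C w * h w, I C v * (c * Q / 8) ^ 2 ≤
      ∑ C, I C v * (∑ w, I C w * z w) ^ 2 := by
    have hI0 : ∀ C v, 0 ≤ I C v := by
      intro C v; rcases hI C v with h | h <;> simp [h]
    refine le_trans (sum_le_sum (g := fun C => I C v * (∑ w, I C w * z w) ^ 2) ?_)
      (sum_le_sum_of_subset_of_nonneg (subset_univ _)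
        fun C _ _ => mul_nonneg (hI0 C v) (sq_nonneg _))
    intro C hC
    rw [mem_filter] at hC
    rcases hI C v with h | h
    · simp [h]
    · have := hlow C h hC.2
      rw [h, one_mul, one_mul]
      exact pow_le_pow_left₀ (by positivity) this 2
  rw [← sum_mul] at hpt
  set M := ∑ C ∈ 𝓕 with c * Q / 2 ≤ ∑ w, I C w * h w, I C v
  have hfin : M * (c * Q / 8) ^ 2 ≤ 2 * Q ^ 2 * N2 * ∑ w, p w * h w ^ 2 :=
    hpt.trans (hG.trans (mul_le_mul_of_nonneg_left hz2 (by positivity)))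
  have : M * (c * Q / 8) ^ 2 ≤ (128 / c ^ 2 * N2 * ∑ w, p w * h w ^ 2) * (c * Q / 8) ^ 2 := by
    refine hfin.trans (le_of_eq ?_)
    field_simp
    ring
  exact le_of_mul_le_mul_right this (by positivity)

end Core

section Core
open Finset

lemma le_of_sq_le_sq_aux {a b : ℝ} (hb : 0 ≤ b) (h : a ^ 2 ≤ b ^ 2) : a ≤ b := by
  by_contra! hc
  nlinarith

set_option maxHeartbeats 1000000 in
lemma num_mu (ν P Q K N1 f S Es Y H1 H2 : ℝ) (hν : 1 ≤ ν) (hQ : 2 ^ 26 * ν ^ 4 ≤ Q)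
    (hKQ : K * Q ≤ P) (hK : Q ≤ K) (hN1 : 0 < N1)
    (hKf : K * f ≤ 8 * ν * P * N1) (hH1 : N1 * H1 ≤ K * f) (hH2 : N1 * H2 ≤ 2 * Q * f)
    (hSY : S ≤ Y) (hS0 : 0 ≤ S) (hEs : Es = P ^ 2 / Q - Q)
    (hY : (Q - 1) * (Y - H1 / Q) ^ 2 ≤ P ^ 2 * H2) :
    (K - Q) * (S / Es) ≤ (1 / (16 * ν)) * Q / 8 := by
  have hν4 : ν ^ 3 ≤ ν ^ 4 := pow_le_pow_right₀ hν (by norm_num)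
  have hν3 : ν ≤ ν ^ 3 := by simpa using pow_le_pow_right₀ hν (show 1 ≤ 3 by norm_num)
  have hQ1 : 2 ^ 26 ≤ Q := by nlinarith
  have hQ3 : 2 ^ 26 * ν ^ 3 ≤ Q := by nlinarith
  have hQ0 : 0 < Q := by linarith
  have hK0 : 0 < K := by linarith
  have hP0 : 0 < P := by nlinarith
  have hν0 : 0 < ν := by linarith
  have hKP : K ≤ P := by nlinarith
  have hQP : Q ^ 2 ≤ P := by nlinarith
  have hEs0 : 0 < Es := by
    rw [hEs, sub_pos, lt_div_iff₀ hQ0, pow_two]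
    exact mul_self_lt_mul_self hQ0.le (by nlinarith)
  have h1 : (K - Q) * (S / Es) ≤ (K * Q / P ^ 2) * Y := by
    have : (K - Q) / Es ≤ K * Q / P ^ 2 := by
      rw [div_le_div_iff₀ hEs0 (by positivity), hEs]
      have : K * Q * (P ^ 2 / Q - Q) = K * P ^ 2 - K * Q ^ 2 := by field_simp
      rw [this]
      have : K * Q ≤ P ^ 2 := by nlinarith
      nlinarith
    calc (K - Q) * (S / Es) = (K - Q) / Es * S := by ring
      _ ≤ (K * Q / P ^ 2) * S := mul_le_mul_of_nonneg_right this hS0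
      _ ≤ _ := mul_le_mul_of_nonneg_left hSY (by positivity)
  have h2 : H1 ≤ 8 * ν * P := by
    have : N1 * H1 ≤ N1 * (8 * ν * P) := by linarith
    exact le_of_mul_le_mul_left this hN1
  have h3 : K * H2 ≤ 16 * ν * Q * P := by
    have : N1 * (K * H2) ≤ N1 * (16 * ν * Q * P) := by
      calc N1 * (K * H2) = K * (N1 * H2) := by ring
        _ ≤ K * (2 * Q * f) := mul_le_mul_of_nonneg_left hH2 hK0.le
        _ = 2 * Q * (K * f) := by ring
        _ ≤ 2 * Q * (8 * ν * P * N1) := mul_le_mul_of_nonneg_left hKf (by positivity)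
        _ = _ := by ring
    exact le_of_mul_le_mul_left this hN1
  have h4 : (K * Q / P ^ 2) * (H1 / Q) ≤ 8 * ν / Q := by
    have e : (K * Q / P ^ 2) * (H1 / Q) = K * H1 / P ^ 2 := by field_simp
    rw [e, div_le_div_iff₀ (by positivity) hQ0]
    calc K * H1 * Q = (K * Q) * H1 := by ring
      _ ≤ (K * Q) * (8 * ν * P) := mul_le_mul_of_nonneg_left h2 (by positivity)
      _ ≤ P * (8 * ν * P) := mul_le_mul_of_nonneg_right hKQ (by positivity)
      _ = _ := by ring
  set t := (K * Q / P ^ 2) * (Y - H1 / Q) with ht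
  have h5 : t ^ 2 ≤ 32 * ν * Q := by
    have e1 : t ^ 2 * (Q - 1) ≤ (K * Q / P ^ 2) ^ 2 * (P ^ 2 * H2) := by
      calc t ^ 2 * (Q - 1) = (K * Q / P ^ 2) ^ 2 * ((Q - 1) * (Y - H1 / Q) ^ 2) := by
            rw [ht]; ring
        _ ≤ _ := mul_le_mul_of_nonneg_left hY (by positivity)
    have e2 : (K * Q / P ^ 2) ^ 2 * (P ^ 2 * H2) = K * Q ^ 2 * (K * H2) / P ^ 2 := by
      field_simp
    have e3 : K * Q ^ 2 * (K * H2) / P ^ 2 ≤ 16 * ν * Q ^ 2 := by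
      rw [div_le_iff₀ (by positivity)]
      calc K * Q ^ 2 * (K * H2) ≤ K * Q ^ 2 * (16 * ν * Q * P) :=
            mul_le_mul_of_nonneg_left h3 (by positivity)
        _ = (K * Q) * (16 * ν * Q ^ 2 * P) := by ring
        _ ≤ P * (16 * ν * Q ^ 2 * P) := mul_le_mul_of_nonneg_right hKQ (by positivity)
        _ = _ := by ring
    have e4 : t ^ 2 * (Q / 2) ≤ 32 * ν * Q * (Q / 2) := by
      have : t ^ 2 * (Q / 2) ≤ t ^ 2 * (Q - 1) :=
        mul_le_mul_of_nonneg_left (by linarith) (sq_nonneg _)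
      nlinarith
    exact le_of_mul_le_mul_right e4 (by positivity)
  have h6 : t ≤ (1 / (16 * ν)) * Q / 16 := by
    apply le_of_sq_le_sq_aux (by positivity)
    refine h5.trans ?_
    have : ((1 / (16 * ν)) * Q / 16) ^ 2 = Q ^ 2 / (2 ^ 16 * ν ^ 2) := by field_simp; norm_num
    rw [this, le_div_iff₀ (by positivity)]
    have e1 : 2 ^ 21 * ν ^ 3 ≤ Q := le_trans (by nlinarith) hQ3
    calc 32 * ν * Q * (2 ^ 16 * ν ^ 2) = 2 ^ 21 * ν ^ 3 * Q := by ring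
      _ ≤ Q * Q := mul_le_mul_of_nonneg_right e1 hQ0.le
      _ = Q ^ 2 := by ring
  have h7 : 8 * ν / Q ≤ (1 / (16 * ν)) * Q / 16 := by
    have : (1 / (16 * ν)) * Q / 16 = Q / (256 * ν) := by field_simp; norm_num
    rw [this, div_le_div_iff₀ hQ0 (by positivity)]
    have e0 : 2 ^ 26 * ν ≤ Q := by linarith
    have e1 : 8 * ν ≤ Q := by linarith
    have e2 : 256 * ν ≤ Q := by linarith
    exact mul_le_mul e1 e2 (by positivity) hQ0.le
  have h8 : (K * Q / P ^ 2) * Y = t + (K * Q / P ^ 2) * (H1 / Q) := by rw [ht]; ring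
  linarith

lemma num_final (ν P Q K N1 N2 f H1 H2 A : ℝ) (hν : 1 ≤ ν) (hQ : 2 ^ 26 * ν ^ 4 ≤ Q)
    (hKQ : K * Q ≤ P) (hK : Q ≤ K) (hN1 : 0 < N1) (hN2 : 0 ≤ N2) (hf : 0 < f)
    (hKf : K * f ≤ 8 * ν * P * N1) (hH1 : N1 * H1 ≤ K * f) (hH2 : N1 * H2 ≤ 2 * Q * f)
    (hH20 : 0 ≤ H2)
    (hN2' : N2 * P ^ 2 ≤ N1 * K * Q)
    (hA : A ≤ H1 * H2 / Q + P * (H2 * (1 / (2 ^ 23 * ν ^ 3))))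
    (hlow : (1 / (16 * ν)) / 2 * Q * f ≤ 128 / (1 / (16 * ν)) ^ 2 * N2 * A) : False := by
  have hν4 : ν ^ 3 ≤ ν ^ 4 := pow_le_pow_right₀ hν (by norm_num)
  have hν3 : ν ≤ ν ^ 3 := by simpa using pow_le_pow_right₀ hν (show 1 ≤ 3 by norm_num)
  have hQ1 : 2 ^ 26 ≤ Q := by nlinarith
  have hQ0 : 0 < Q := by linarith
  have hK0 : 0 < K := by linarith
  have hP0 : 0 < P := by nlinarith
  have hν0 : 0 < ν := by linarith
  have h2 : H1 ≤ 8 * ν * P := by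
    have : N1 * H1 ≤ N1 * (8 * ν * P) := by linarith
    exact le_of_mul_le_mul_left this hN1
  -- N2 * H2 * P ^ 2 ≤ 2 K Q^2 f
  have h3 : N2 * H2 * P ≤ 2 * Q * f := by
    have e1 : N2 * H2 * P * P ≤ 2 * Q * f * P := by
      calc N2 * H2 * P * P = (N2 * P ^ 2) * H2 := by ring
        _ ≤ (N1 * K * Q) * H2 := mul_le_mul_of_nonneg_right hN2' hH20
        _ = (K * Q) * (N1 * H2) := by ring
        _ ≤ (K * Q) * (2 * Q * f) := mul_le_mul_of_nonneg_left hH2 (by positivity)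
        _ ≤ P * (2 * Q * f) := mul_le_mul_of_nonneg_right hKQ (by positivity)
        _ = _ := by ring
    exact le_of_mul_le_mul_right e1 hP0
  have h4 : N2 * A ≤ 2 * Q * f * (8 * ν / Q + 1 / (2 ^ 23 * ν ^ 3)) := by
    calc N2 * A ≤ N2 * (H1 * H2 / Q + P * (H2 * (1 / (2 ^ 23 * ν ^ 3)))) :=
          mul_le_mul_of_nonneg_left hA hN2
      _ = (N2 * H2) * H1 / Q + (N2 * H2 * P) * (1 / (2 ^ 23 * ν ^ 3)) := by ring
      _ ≤ (N2 * H2) * (8 * ν * P) / Q + (N2 * H2 * P) * (1 / (2 ^ 23 * ν ^ 3)) := by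
          gcongr
      _ = (N2 * H2 * P) * (8 * ν / Q + 1 / (2 ^ 23 * ν ^ 3)) := by ring
      _ ≤ _ := mul_le_mul_of_nonneg_right h3 (by positivity)
  have h5 : 8 * ν / Q ≤ 1 / (2 ^ 23 * ν ^ 3) := by
    rw [div_le_div_iff₀ hQ0 (by positivity)]
    nlinarith
  have h6 : N2 * A ≤ 2 * Q * f * (2 * (1 / (2 ^ 23 * ν ^ 3))) :=
    h4.trans (mul_le_mul_of_nonneg_left (by linarith) (by positivity))
  have h7 : 128 / (1 / (16 * ν)) ^ 2 * N2 * A ≤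
      128 / (1 / (16 * ν)) ^ 2 * (2 * Q * f * (2 * (1 / (2 ^ 23 * ν ^ 3)))) := by
    rw [mul_assoc]; exact mul_le_mul_of_nonneg_left h6 (by positivity)
  have h8 : 128 / (1 / (16 * ν)) ^ 2 * (2 * Q * f * (2 * (1 / (2 ^ 23 * ν ^ 3))))
      = (1 / (16 * ν)) / 4 * Q * f := by field_simp; norm_num
  have h9 : 0 < (1 / (16 * ν)) / 4 * Q * f := by positivity
  have : (1 / (16 * ν)) / 2 * Q * f = 2 * ((1 / (16 * ν)) / 4 * Q * f) := by ring
  linarith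

lemma core_step3 {V Ω : Type} [Fintype V] [Fintype Ω] (z0 : V) (𝓕 : Finset Ω) (I : Ω → V → ℝ)
    (p e : V → V → ℝ)
    (ν P Q K N1 N2 f : ℝ) (hν : 1 ≤ ν) (hQ : 2 ^ 26 * ν ^ 4 ≤ Q)
    (hKQ : K * Q ≤ P) (hK : Q ≤ K) (hN1 : 0 < N1) (hN2 : 0 ≤ N2) (hf : 0 < f)
    (hf' : f = #𝓕) (hKf : K * f ≤ 8 * ν * P * N1)
    (hN2' : N2 * P ^ 2 ≤ N1 * K * Q)
    (hI : ∀ C v, I C v = 0 ∨ I C v = 1)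
    (he : ∀ v w, e v w = 0 ∨ e v w = 1) (hep : ∀ v w, e v w ≤ p v w)
    (hEs : ∀ v, v ≠ z0 → ∑ w, e v w = P ^ 2 / Q - Q)
    (hIe : ∀ C v, I C v = 1 → ∑ w, I C w * e v w = K - Q)
    (hIe' : ∀ C v, I C v = 1 → ∑ w, I C w * (1 - e v w) ≤ Q)
    (hPar : ∀ a b : V → ℝ, a z0 = 0 →
      (∑ v, ∑ w, a v * b w * p v w - (∑ v, a v) * (∑ w, b w) / Q) ^ 2 ≤
        P ^ 2 * (∑ v, a v ^ 2) * (∑ w, b w ^ 2))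
    (hPar1 : ∀ (b : V → ℝ) (v : V), v ≠ z0 →
      (Q - 1) * (∑ w, p v w * b w - (∑ w, b w) / Q) ^ 2 ≤ P ^ 2 * (∑ w, b w ^ 2))
    (G1 : ∀ v, v ≠ z0 → ∀ z : V → ℝ, (∀ w, e v w * z w = z w) → ∑ w, z w = 0 →
      ∑ C, I C v * (∑ w, I C w * z w) ^ 2 ≤ 2 * Q ^ 2 * N2 * ∑ w, z w ^ 2)
    (h : V → ℝ) (h0 : ∀ w, 0 ≤ h w) (hτ : ∀ w, h w ≤ 1 / (2 ^ 23 * ν ^ 3))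
    (hz : h z0 = 0) (hX : ∀ v, N1 * h v ≤ ∑ C ∈ 𝓕, I C v)
    (hH1 : N1 * ∑ v, h v ≤ K * f) (hH2 : N1 * ∑ v, h v ^ 2 ≤ 2 * Q * f) :
    N1 * ∑ v, h v ^ 2 < (1 / (16 * ν)) * Q * f := by
  by_contra! hcon
  set c := 1 / (16 * ν) with hc
  set τ := 1 / (2 ^ 23 * ν ^ 3) with hτd
  have hν0 : 0 < ν := by linarith
  have hc0 : 0 < c := by positivity
  have hτ0 : 0 < τ := by positivity
  have hν3 : ν ≤ ν ^ 3 := by simpa using pow_le_pow_right₀ hν (show 1 ≤ 3 by norm_num)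
  have hν4 : ν ^ 3 ≤ ν ^ 4 := pow_le_pow_right₀ hν (by norm_num)
  have hQ1 : 2 ^ 26 ≤ Q := by nlinarith
  have hQ0 : 0 < Q := by linarith
  have hP0 : 0 < P := by nlinarith
  have hQP : Q ^ 2 ≤ P := by nlinarith
  have hτc : τ ≤ c / 8 := by
    have : c / 8 = 1 / (128 * ν) := by rw [hc]; field_simp; norm_num
    rw [this, hτd]
    apply one_div_le_one_div_of_le (by positivity)
    nlinarith
  have hp : ∀ v w, 0 ≤ p v w := fun v w => by
    rcases he v w with h | h <;> have := hep v w <;> linarith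
  set g : Ω → ℝ := fun C => ∑ w, I C w * h w with hg
  set H1 := ∑ v, h v
  set H2 := ∑ v, h v ^ 2
  have hH20 : 0 ≤ H2 := sum_nonneg fun _ _ => sq_nonneg _
  -- total
  have t1 : c * Q * f ≤ ∑ C ∈ 𝓕, g C := by
    have : ∑ C ∈ 𝓕, g C = ∑ v, (∑ C ∈ 𝓕, I C v) * h v := by
      simp only [hg]; rw [sum_comm]; simp_rw [sum_mul]
    rw [this]
    refine hcon.trans ?_
    rw [mul_sum]
    apply sum_le_sum
    intro v _
    nlinarith [mul_le_mul_of_nonneg_right (hX v) (h0 v)]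
  have t2 : ∑ C ∈ 𝓕 with ¬ (c * Q / 2 ≤ g C), g C ≤ c * Q / 2 * f := by
    calc _ ≤ ∑ C ∈ 𝓕 with ¬ (c * Q / 2 ≤ g C), c * Q / 2 := by
          apply sum_le_sum
          intro C hC
          rw [mem_filter, not_le] at hC
          exact hC.2.le
      _ ≤ ∑ C ∈ 𝓕, c * Q / 2 :=
          sum_le_sum_of_subset_of_nonneg (filter_subset _ _) (fun _ _ _ => by positivity)
      _ = _ := by rw [sum_const, hf']; simp; ring
  have t3 := sum_filter_add_sum_filter_not 𝓕 (fun C => c * Q / 2 ≤ g C) g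
  have t4 : c / 2 * Q * f ≤ ∑ C ∈ 𝓕 with c * Q / 2 ≤ g C, g C := by
    have : c / 2 * Q * f = c * Q * f - c * Q / 2 * f := by ring
    linarith
  have t5 : ∑ C ∈ 𝓕 with c * Q / 2 ≤ g C, g C =
      ∑ v, h v * ∑ C ∈ 𝓕 with c * Q / 2 ≤ g C, I C v := by
    simp only [hg]; rw [sum_comm]
    apply sum_congr rfl
    intro v _
    rw [mul_sum]; apply sum_congr rfl; intro C _; ring
  have t6 : ∀ v, h v * ∑ C ∈ 𝓕 with c * Q / 2 ≤ g C, I C v ≤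
      h v * (128 / c ^ 2 * N2 * ∑ w, p v w * h w ^ 2) := by
    intro v
    by_cases hv : v = z0
    · subst hv; rw [hz]; simp
    · apply mul_le_mul_of_nonneg_left _ (h0 v)
      have hS0 : 0 ≤ ∑ w, e v w * h w := sum_nonneg fun w _ => mul_nonneg
        (by rcases he v w with h | h <;> simp [h]) (h0 w)
      have hEp : 0 < ∑ w, e v w := by
        rw [hEs v hv, sub_pos, lt_div_iff₀ hQ0, pow_two]
        exact mul_self_lt_mul_self hQ0.le (by nlinarith)
      refine core_Mv 𝓕 I Q K N2 c τ hQ0 hc0 hN2 hτc hI v (e v) (p v) (he v) (hep v) hEp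
        (fun C => hIe C v) (fun C => hIe' C v) (G1 v hv) h h0 hτ ?_
      exact num_mu ν P Q K N1 f _ _ (∑ w, p v w * h w) H1 H2 hν hQ hKQ hK hN1 hKf hH1 hH2
        (sum_le_sum fun w _ => mul_le_mul_of_nonneg_right (hep v w) (h0 w)) hS0 (hEs v hv)
        (hPar1 h v hv)
  have t7 : ∑ v, h v * (128 / c ^ 2 * N2 * ∑ w, p v w * h w ^ 2) =
      128 / c ^ 2 * N2 * ∑ v, ∑ w, h v * (h w ^ 2) * p v w := by
    simp_rw [mul_sum]
    apply sum_congr rfl; intro v _; apply sum_congr rfl; intro w _; ring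
  have t8 := hPar h (fun w => h w ^ 2) hz
  set A := ∑ v, ∑ w, h v * (h w ^ 2) * p v w
  have t9 : ∑ w, (h w ^ 2) ^ 2 ≤ τ ^ 2 * H2 := by
    rw [mul_sum]
    apply sum_le_sum
    intro w _
    have : h w ^ 2 ≤ τ ^ 2 := pow_le_pow_left₀ (h0 w) (hτ w) 2
    nlinarith [sq_nonneg (h w)]
  have t10 : A - H1 * H2 / Q ≤ P * (H2 * τ) := by
    apply le_of_sq_le_sq_aux (by positivity)
    refine t8.trans ?_
    calc P ^ 2 * H2 * ∑ w, (h w ^ 2) ^ 2 ≤ P ^ 2 * H2 * (τ ^ 2 * H2) :=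
          mul_le_mul_of_nonneg_left t9 (by positivity)
      _ = _ := by ring
  refine num_final ν P Q K N1 N2 f H1 H2 A hν hQ hKQ hK hN1 hN2 hf hKf hH1 hH2 hH20 hN2'
    (by rw [← hτd]; linarith) ?_
  calc _ ≤ _ := t4
    _ = _ := t5
    _ ≤ _ := sum_le_sum fun v _ => t6 v
    _ = _ := t7

end Core

section Core
open Finset

set_option maxHeartbeats 1000000 in
lemma core_high {V Ω : Type} [Fintype V] [Fintype Ω] (z0 : V) (𝓕 : Finset Ω) (I : Ω → V → ℝ)
    (p e : V → V → ℝ)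
    (ν P Q K N1 N2 f : ℝ) (hν : 1 ≤ ν) (hQ : 2 ^ 26 * ν ^ 4 ≤ Q)
    (hKQ : K * Q ≤ P) (hK : Q ≤ K) (hN1 : 0 < N1) (hN2 : 0 ≤ N2) (hf : 0 < f)
    (hf' : f = #𝓕) (hNf : N1 * P ≤ 2 * K * f)
    (hN2' : N2 * P ^ 2 ≤ N1 * K * Q)
    (hcard : ∑ v : V, (if v = z0 then (0:ℝ) else 1) = P ^ 2 - 1)
    (hI0 : ∀ C, I C z0 = 0)
    (hrow : ∀ C, ∑ v, I C v = K - 1)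
    (hcol : ∀ v, ∑ C, I C v ≤ N1)
    (hI : ∀ C v, I C v = 0 ∨ I C v = 1)
    (he : ∀ v w, e v w = 0 ∨ e v w = 1) (hep : ∀ v w, e v w ≤ p v w)
    (hEs : ∀ v, v ≠ z0 → ∑ w, e v w = P ^ 2 / Q - Q)
    (hIe : ∀ C v, I C v = 1 → ∑ w, I C w * e v w = K - Q)
    (hIe' : ∀ C v, I C v = 1 → ∑ w, I C w * (1 - e v w) ≤ Q)
    (hPar : ∀ a b : V → ℝ, a z0 = 0 →
      (∑ v, ∑ w, a v * b w * p v w - (∑ v, a v) * (∑ w, b w) / Q) ^ 2 ≤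
        P ^ 2 * (∑ v, a v ^ 2) * (∑ w, b w ^ 2))
    (hPar1 : ∀ (b : V → ℝ) (v : V), v ≠ z0 →
      (Q - 1) * (∑ w, p v w * b w - (∑ w, b w) / Q) ^ 2 ≤ P ^ 2 * (∑ w, b w ^ 2))
    (G0 : ∀ z : V → ℝ, z z0 = 0 → ∑ v, z v = 0 →
      ∑ C, (∑ v, I C v * z v) ^ 2 ≤ Q * N1 * ∑ v, z v ^ 2)
    (G1 : ∀ v, v ≠ z0 → ∀ z : V → ℝ, (∀ w, e v w * z w = z w) → ∑ w, z w = 0 →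
      ∑ C, I C v * (∑ w, I C w * z w) ^ 2 ≤ 2 * Q ^ 2 * N2 * ∑ w, z w ^ 2)
    (hS1 : Q * K * f ^ 2 ≤ 4 * ν * P * ∑ v, (∑ C ∈ 𝓕, I C v) ^ 2) :
    Q ≤ #{v | 1 / (2 ^ 23 * ν ^ 3) * N1 < ∑ C ∈ 𝓕, I C v} := by
  set X : V → ℝ := fun v => ∑ C ∈ 𝓕, I C v with hX
  set S2 := ∑ v, X v ^ 2 with hS2
  set τ := 1 / (2 ^ 23 * ν ^ 3) with hτ
  have hν0 : 0 < ν := by linarith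
  have hν2 : ν ≤ ν ^ 4 := by simpa using pow_le_pow_right₀ hν (show 1 ≤ 4 by norm_num)
  have hQ1 : 2 ^ 26 * ν ≤ Q := by linarith
  have hQ0 : 0 < Q := by linarith
  have hQQ : 16 * ν ≤ Q := by linarith
  have hQQ2 : 16 * ν ≤ Q ^ 2 := by nlinarith
  have hK0 : 0 < K := by linarith
  have hP0 : 0 < P := by nlinarith
  have hKP : K / P ≤ 1 / Q := by
    rw [div_le_div_iff₀ hP0 hQ0]; linarith
  have hKPQ : K ≤ P := by nlinarith
  have hI0' : ∀ C v, 0 ≤ I C v := by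
    intro C v; rcases hI C v with h | h <;> simp [h]
  have hX0 : ∀ v, 0 ≤ X v := fun v => sum_nonneg fun C _ => hI0' C v
  have hXN : ∀ v, X v ≤ N1 := fun v =>
    (sum_le_sum_of_subset_of_nonneg (subset_univ _) (fun C _ _ => hI0' C v)).trans (hcol v)
  have hXs : ∑ v, X v = (K - 1) * f := by
    simp only [hX]; rw [sum_comm]; simp [hrow, hf']; ring
  have s2 : S2 ≤ Q * N1 * f + 2 * K ^ 2 * f ^ 2 / P ^ 2 :=
    core_step2 z0 𝓕 I P Q K N1 f (by linarith) (by linarith) hQ0 hN1 hf' hcard hI0 hrow G0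
  have hKf : K * f ≤ 8 * ν * P * N1 := by
    have e1 : 4 * ν * P * S2 ≤ 4 * ν * P * Q * N1 * f + 8 * ν * K ^ 2 * f ^ 2 / P := by
      calc 4 * ν * P * S2 ≤ 4 * ν * P * (Q * N1 * f + 2 * K ^ 2 * f ^ 2 / P ^ 2) :=
            mul_le_mul_of_nonneg_left s2 (by positivity)
        _ = _ := by field_simp; ring
    have e2 : 8 * ν * K ^ 2 * f ^ 2 / P ≤ Q * K * f ^ 2 / 2 := by
      calc 8 * ν * K ^ 2 * f ^ 2 / P = (8 * ν * K * f ^ 2) * (K / P) := by ring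
        _ ≤ (8 * ν * K * f ^ 2) * (1 / Q) := mul_le_mul_of_nonneg_left hKP (by positivity)
        _ ≤ _ := by
          rw [mul_one_div, div_le_iff₀ hQ0]
          have : 0 ≤ K * f ^ 2 := by positivity
          nlinarith
    have e3 : (Q * f) * (K * f) ≤ (Q * f) * (8 * ν * P * N1) := by linarith
    exact le_of_mul_le_mul_left e3 (by positivity)
  have s2' : S2 ≤ 2 * Q * N1 * f := by
    have : 2 * K ^ 2 * f ^ 2 / P ^ 2 ≤ Q * N1 * f := by
      calc 2 * K ^ 2 * f ^ 2 / P ^ 2 = (2 * (K / P) * f / P) * (K * f) := by ring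
        _ ≤ (2 * (K / P) * f / P) * (8 * ν * P * N1) :=
            mul_le_mul_of_nonneg_left hKf (by positivity)
        _ = (K / P) * (16 * ν * N1 * f) := by field_simp; ring
        _ ≤ (1 / Q) * (16 * ν * N1 * f) := mul_le_mul_of_nonneg_right hKP (by positivity)
        _ ≤ _ := by
          rw [one_div_mul_eq_div, div_le_iff₀ hQ0]
          have : 0 ≤ N1 * f := by positivity
          nlinarith
    linarith
  have s1' : Q * N1 * f ≤ 8 * ν * S2 := by
    have : P * (Q * N1 * f) ≤ P * (8 * ν * S2) := by
      calc P * (Q * N1 * f) = (N1 * P) * (Q * f) := by ring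
        _ ≤ (2 * K * f) * (Q * f) := mul_le_mul_of_nonneg_right hNf (by positivity)
        _ = 2 * (Q * K * f ^ 2) := by ring
        _ ≤ 2 * (4 * ν * P * S2) := by linarith
        _ = _ := by ring
    exact le_of_mul_le_mul_left this hP0
  set h : V → ℝ := fun v => if X v ≤ τ * N1 then X v / N1 else 0 with hh
  have h0 : ∀ v, 0 ≤ h v := by
    intro v; simp only [hh]; split_ifs
    · exact div_nonneg (hX0 v) hN1.le
    · exact le_rfl
  have hle : ∀ v, N1 * h v ≤ X v := by
    intro v; simp only [hh]; split_ifs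
    · exact le_of_eq (by field_simp)
    · simpa using hX0 v
  have hhτ : ∀ v, h v ≤ τ := by
    intro v; simp only [hh]; split_ifs with h1
    · rw [div_le_iff₀ hN1]; exact h1
    · positivity
  have hz : h z0 = 0 := by
    have : X z0 = 0 := by simp [hX, hI0]
    simp only [hh, this]; simp
  have hH1 : N1 * ∑ v, h v ≤ K * f := by
    rw [mul_sum]
    refine (sum_le_sum fun v _ => hle v).trans ?_
    rw [hXs]; nlinarith
  have hH2' : N1 * ∑ v, h v ^ 2 ≤ S2 / N1 := by
    rw [le_div_iff₀ hN1, mul_comm, ← mul_assoc, mul_sum]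
    apply sum_le_sum
    intro v _
    calc N1 * N1 * h v ^ 2 = (N1 * h v) ^ 2 := by ring
      _ ≤ _ := pow_le_pow_left₀ (mul_nonneg hN1.le (h0 v)) (hle v) 2
  have hH2 : N1 * ∑ v, h v ^ 2 ≤ 2 * Q * f := by
    refine hH2'.trans ?_
    rw [div_le_iff₀ hN1]; linarith
  have s3 := core_step3 z0 𝓕 I p e ν P Q K N1 N2 f hν hQ hKQ hK hN1 hN2 hf hf' hKf hN2' hI he hep
    hEs hIe hIe' hPar hPar1 G1 h h0 hhτ hz hle hH1 hH2
  -- high part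
  have s4 : S2 ≤ N1 ^ 2 * ∑ v, h v ^ 2 + (#{v | τ * N1 < X v} : ℝ) * N1 ^ 2 := by
    have : (#{v | τ * N1 < X v} : ℝ) = ∑ v : V, if τ * N1 < X v then (1:ℝ) else 0 := by
      simp
    rw [this, mul_sum, sum_mul, ← sum_add_distrib]
    apply sum_le_sum
    intro v _
    simp only [hh]
    by_cases hv : X v ≤ τ * N1
    · rw [if_pos hv, if_neg (not_lt.2 hv)]
      apply le_of_eq; field_simp; ring
    · rw [if_neg hv, if_pos (not_le.1 hv)]
      have := pow_le_pow_left₀ (hX0 v) (hXN v) 2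
      simpa using this
  set k : ℝ := (#{v | τ * N1 < X v} : ℝ) with hk
  have s5 : 1 / (16 * ν) * Q * f ≤ k * N1 := by
    have e1 : N1 * (N1 * ∑ v, h v ^ 2) ≤ N1 * (1 / (16 * ν) * Q * f) :=
      mul_le_mul_of_nonneg_left s3.le hN1.le
    have e2 : 2 * (N1 * (1 / (16 * ν) * Q * f)) ≤ S2 := by
      have : 2 * (N1 * (1 / (16 * ν) * Q * f)) = (Q * N1 * f) / (8 * ν) := by field_simp; norm_num
      rw [this, div_le_iff₀ (by positivity)]; linarith
    have e3 : N1 * (1 / (16 * ν) * Q * f) ≤ N1 * (k * N1) := by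
      have a1 : N1 ^ 2 * ∑ v, h v ^ 2 = N1 * (N1 * ∑ v, h v ^ 2) := by ring
      have a2 : k * N1 ^ 2 = N1 * (k * N1) := by ring
      linarith
    exact le_of_mul_le_mul_left e3 hN1
  have s6 : Q * (16 * ν) * N1 * (2 * K) ≤ k * N1 * (16 * ν) * (2 * K) := by
    have e1 : Q * f ≤ k * N1 * (16 * ν) := by
      have : 1 / (16 * ν) * Q * f = Q * f / (16 * ν) := by ring
      rw [this, div_le_iff₀ (by positivity)] at s5
      exact s5
    calc Q * (16 * ν) * N1 * (2 * K) = (Q * K) * (32 * ν) * N1 := by ring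
      _ ≤ (K * Q) * Q * N1 := by
          have : 32 * ν ≤ Q := by linarith
          have h2 : (Q * K * N1) * (32 * ν) ≤ (Q * K * N1) * Q :=
            mul_le_mul_of_nonneg_left this (by positivity)
          linarith
      _ ≤ P * Q * N1 := by gcongr
      _ = (N1 * P) * Q := by ring
      _ ≤ (2 * K * f) * Q := by gcongr
      _ = (Q * f) * (2 * K) := by ring
      _ ≤ _ := mul_le_mul_of_nonneg_right e1 (by positivity)
  have e : (2 * K * (16 * ν) * N1) * Q ≤ (2 * K * (16 * ν) * N1) * k := by linarith
  exact le_of_mul_le_mul_left e (by positivity)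

end Core

/-! ### Counting -/
set_option linter.unusedSectionVars false
section Count
open Finset
variable {F V : Type} [Field F] [Fintype F] [AddCommGroup V] [Module F V] [Fintype V]

/-- membership indicator -/
noncomputable def mi (W : Submodule F V) (v : V) : ℝ := if v ∈ W then 1 else 0
/-- nonzero membership indicator -/
noncomputable def ind (W : Submodule F V) (v : V) : ℝ := if v ∈ W ∧ v ≠ 0 then 1 else 0
/-- perpendicularity indicator -/
noncomputable def pp (B : V →ₗ[F] V →ₗ[F] F) (v w : V) : ℝ := if B v w = 0 then 1 else 0
/-- perpendicular and independent indicator -/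
noncomputable def ee (B : V →ₗ[F] V →ₗ[F] F) (v w : V) : ℝ :=
  if B v w = 0 ∧ w ∉ Submodule.span F {v} then 1 else 0

lemma sum_mi (W : Submodule F V) : ∑ v, mi W v = (Fintype.card F : ℝ) ^ finrank F W := by
  simp only [mi]
  rw [Finset.sum_boole]
  have h : Fintype.card W = Fintype.card F ^ finrank F W := Module.card_eq_pow_finrank
  rw [← Nat.cast_pow, ← h, Fintype.card_subtype]

lemma ind_eq (W : Submodule F V) (v : V) : ind W v = mi W v - mi (⊥ : Submodule F V) v := by
  simp only [ind, mi, Submodule.mem_bot]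
  by_cases h : v = 0
  · subst h; simp
  · by_cases h' : v ∈ W <;> simp [h, h']

lemma pp_eq (B : V →ₗ[F] V →ₗ[F] F) (v w : V) :
    pp B v w = mi (bperp B (Submodule.span F {v})) w := by
  simp [pp, mi, span_le_bperp]

lemma sum_ind (W : Submodule F V) : ∑ v, ind W v = (Fintype.card F : ℝ) ^ finrank F W - 1 := by
  simp_rw [ind_eq]
  rw [sum_sub_distrib, sum_mi, sum_mi, finrank_bot, pow_zero]

lemma span_le_perp {B : V →ₗ[F] V →ₗ[F] F} (hB : IsAltForm B) (v : V) :
    Submodule.span F {v} ≤ bperp B (Submodule.span F {v}) := by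
  intro w hw
  obtain ⟨a, rfl⟩ := Submodule.mem_span_singleton.1 hw
  rw [span_le_bperp]
  intro x hx
  rw [Set.mem_singleton_iff] at hx
  subst hx
  simp [hB x]

lemma mi_diff {U W : Submodule F V} (h : U ≤ W) (w : V) :
    (if w ∈ W ∧ w ∉ U then (1:ℝ) else 0) = mi W w - mi U w := by
  simp only [mi]
  by_cases h1 : w ∈ U
  · simp [h1, h h1]
  · simp [h1]

lemma ee_eq {B : V →ₗ[F] V →ₗ[F] F} (hB : IsAltForm B) (v w : V) :
    ee B v w = mi (bperp B (Submodule.span F {v})) w - mi (Submodule.span F {v}) w := by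
  rw [← mi_diff (span_le_perp hB v)]
  simp [ee, span_le_bperp]

lemma finrank_pair {u v : V} (hu : u ≠ 0) (hv : v ∉ Submodule.span F {u}) :
    finrank F (Submodule.span F {u, v}) = 2 := by
  have e : Submodule.span F {u, v} = Submodule.span F {u} ⊔ Submodule.span F {v} :=
    Submodule.span_insert u {v}
  have hv0 : v ≠ 0 := fun h => hv (h ▸ Submodule.zero_mem _)
  have h := Submodule.finrank_sup_add_finrank_inf_eq (Submodule.span F {u}) (Submodule.span F {v})
  have hinf : Submodule.span F {u} ⊓ Submodule.span F {v} = ⊥ := by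
    rw [eq_bot_iff]
    rintro x ⟨hx1, hx2⟩
    obtain ⟨a, rfl⟩ := Submodule.mem_span_singleton.1 hx2
    by_cases ha : a = 0
    · simp [ha]
    · exact absurd ((Submodule.smul_mem_iff _ ha).1 hx1) hv
  rw [hinf, finrank_bot, finrank_span_singleton hu, finrank_span_singleton hv0] at h
  rw [e]; omega

/-- the standing assumptions -/
structure Setup (B : V →ₗ[F] V →ₗ[F] F) (n : ℕ) (Q P : ℝ) : Prop where
  alt : IsAltForm B
  nd : NondegForm B
  dim : finrank F V = 2 * n
  hn : 3 ≤ n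
  hQ : Q = Fintype.card F
  hP : P = Q ^ n
  hQ2 : 2 ≤ Q

variable {B : V →ₗ[F] V →ₗ[F] F} {n : ℕ} {Q P : ℝ}

lemma Setup.sum_mi (S : Setup B n Q P) (W : Submodule F V) : ∑ v, mi W v = Q ^ finrank F W := by
  rw [S.hQ]; exact _root_.sum_mi W

lemma Setup.Q0 (S : Setup B n Q P) : 0 < Q := by linarith [S.hQ2]

lemma Setup.P0 (S : Setup B n Q P) : 0 < P := by rw [S.hP]; exact pow_pos S.Q0 _

lemma Setup.QP (S : Setup B n Q P) : Q ^ 3 ≤ P := by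
  rw [S.hP]; exact pow_le_pow_right₀ (by linarith [S.hQ2]) S.hn

lemma Setup.sum_perp (S : Setup B n Q P) (W : Submodule F V) :
    ∑ v, mi (bperp B W) v = P ^ 2 / Q ^ finrank F W := by
  have h := finrank_bperp S.alt S.nd W
  rw [S.sum_mi, eq_div_iff (pow_ne_zero _ S.Q0.ne'), ← pow_add, h, S.dim, S.hP]
  ring

lemma Setup.sum_pp (S : Setup B n Q P) {v : V} (hv : v ≠ 0) :
    ∑ w, pp B v w = P ^ 2 / Q := by
  simp_rw [pp_eq]
  rw [S.sum_perp, finrank_span_singleton hv, pow_one]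

lemma Setup.sum_ee (S : Setup B n Q P) {v : V} (hv : v ≠ 0) :
    ∑ w, ee B v w = P ^ 2 / Q - Q := by
  simp_rw [ee_eq S.alt]
  rw [sum_sub_distrib, S.sum_perp, S.sum_mi, finrank_span_singleton hv, pow_one]

lemma Setup.sum_all (S : Setup B n Q P) : ∑ _v : V, (1:ℝ) = P ^ 2 := by
  have h := S.sum_mi (⊤ : Submodule F V)
  rw [finrank_top, S.dim] at h
  simp only [mi, Submodule.mem_top, if_true] at h
  rw [h, S.hP]; ring

lemma pp_mul (B : V →ₗ[F] V →ₗ[F] F) (u v w : V) :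
    pp B u w * pp B v w = mi (bperp B (Submodule.span F {u, v})) w := by
  simp only [pp, mi, span_le_bperp]
  by_cases h1 : B u w = 0 <;> by_cases h2 : B v w = 0 <;> simp [h1, h2]

lemma Setup.sum_pp_pp (S : Setup B n Q P) {u v : V} (hu : u ≠ 0)
    (hv : v ∉ Submodule.span F {u}) :
    ∑ w, pp B u w * pp B v w = P ^ 2 / Q ^ 2 := by
  simp_rw [pp_mul]
  rw [S.sum_perp, finrank_pair hu hv]

lemma pp_nonneg (v w : V) : 0 ≤ pp B v w := by simp only [pp]; split_ifs <;> norm_num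
lemma pp_le_one (v w : V) : pp B v w ≤ 1 := by simp only [pp]; split_ifs <;> norm_num
lemma mi_nonneg (W : Submodule F V) (w : V) : 0 ≤ mi W w := by
  simp only [mi]; split_ifs <;> norm_num

/-- dependent-kernel Schur bound -/
lemma Setup.schur_dep (S : Setup B n Q P) (a : V → ℝ) (ha : a 0 = 0) (k : V → V → ℝ) (D : ℝ)
    (hD : 0 ≤ D)
    (h0 : ∀ u v, u ≠ 0 → v ∉ Submodule.span F {u} → k u v = 0)
    (h1 : ∀ u v, u ≠ 0 → v ≠ 0 → v ∈ Submodule.span F {u} → |k u v| ≤ D) :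
    ∑ u, ∑ v, a u * a v * k u v ≤ D * (Q - 1) * ∑ u, a u ^ 2 := by
  have pt : ∀ u v, a u * a v * k u v ≤
      D / 2 * (a u ^ 2 * ind (Submodule.span F {u}) v) +
      D / 2 * (a v ^ 2 * ind (Submodule.span F {v}) u) := by
    intro u v
    have hind : ∀ u v : V, 0 ≤ ind (Submodule.span F {u}) v := by
      intro u v; simp only [ind]; split_ifs <;> norm_num
    have hR : 0 ≤ D / 2 * (a u ^ 2 * ind (Submodule.span F {u}) v) +
      D / 2 * (a v ^ 2 * ind (Submodule.span F {v}) u) := by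
      have := hind u v; have := hind v u; positivity
    by_cases hu : u = 0
    · subst hu; rw [ha]; simpa [ha] using hR
    by_cases hv : v = 0
    · subst hv; rw [ha]; simpa [ha] using hR
    by_cases hd : v ∈ Submodule.span F {u}
    · have hd' : u ∈ Submodule.span F {v} := by
        obtain ⟨t, rfl⟩ := Submodule.mem_span_singleton.1 hd
        have ht : t ≠ 0 := by rintro rfl; simp at hv
        exact Submodule.mem_span_singleton.2 ⟨t⁻¹, by rw [smul_smul, inv_mul_cancel₀ ht, one_smul]⟩
      have e1 : ind (Submodule.span F {u}) v = 1 := by simp [ind, hd, hv]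
      have e2 : ind (Submodule.span F {v}) u = 1 := by simp [ind, hd', hu]
      rw [e1, e2]
      have h2 := h1 u v hu hv hd
      calc a u * a v * k u v ≤ |a u * a v| * |k u v| := by
            rw [← abs_mul]; exact le_abs_self _
        _ ≤ |a u * a v| * D := mul_le_mul_of_nonneg_left h2 (abs_nonneg _)
        _ ≤ ((a u ^ 2 + a v ^ 2) / 2) * D := by
            apply mul_le_mul_of_nonneg_right _ hD
            rw [abs_le]; constructor <;> nlinarith [sq_nonneg (a u + a v), sq_nonneg (a u - a v)]
        _ = _ := by ring
    · rw [h0 u v hu hd]; simpa using hR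
  have s1 : ∑ u, ∑ v, a u ^ 2 * ind (Submodule.span F {u}) v ≤ (Q - 1) * ∑ u, a u ^ 2 := by
    rw [mul_sum]
    apply sum_le_sum
    intro u _
    rw [← mul_sum, sum_ind, ← S.hQ, mul_comm]
    by_cases hu : u = 0
    · subst hu; simp [ha]
    · rw [finrank_span_singleton hu, pow_one]
  have s2 : ∑ u, ∑ v, a v ^ 2 * ind (Submodule.span F {v}) u ≤ (Q - 1) * ∑ u, a u ^ 2 := by
    rw [sum_comm]; exact s1
  calc _ ≤ ∑ u, ∑ v, (D / 2 * (a u ^ 2 * ind (Submodule.span F {u}) v) +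
      D / 2 * (a v ^ 2 * ind (Submodule.span F {v}) u)) :=
        sum_le_sum fun u _ => sum_le_sum fun v _ => pt u v
    _ = D / 2 * ∑ u, ∑ v, a u ^ 2 * ind (Submodule.span F {u}) v +
        D / 2 * ∑ u, ∑ v, a v ^ 2 * ind (Submodule.span F {v}) u := by
        simp_rw [sum_add_distrib, mul_sum]
    _ ≤ D / 2 * ((Q - 1) * ∑ u, a u ^ 2) + D / 2 * ((Q - 1) * ∑ u, a u ^ 2) := by
        gcongr
    _ = _ := by ring

lemma Setup.parseval_sq (S : Setup B n Q P) (a : V → ℝ) (ha : a 0 = 0) :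
    ∑ w, (∑ v, a v * (pp B v w - 1 / Q)) ^ 2 ≤ P ^ 2 * ∑ v, a v ^ 2 := by
  have hQ := S.Q0
  have e1 : ∑ w, (∑ v, a v * (pp B v w - 1 / Q)) ^ 2 =
      ∑ u, ∑ v, a u * a v * ∑ w, (pp B u w - 1 / Q) * (pp B v w - 1 / Q) := by
    simp_rw [pow_two, sum_mul_sum, mul_sum]
    rw [sum_comm]
    apply sum_congr rfl; intro u _
    rw [sum_comm]
    apply sum_congr rfl; intro v _
    apply sum_congr rfl; intro w _
    ring
  have e2 : ∀ u v, u ≠ 0 → v ≠ 0 → ∑ w, (pp B u w - 1 / Q) * (pp B v w - 1 / Q) =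
      ∑ w, pp B u w * pp B v w - P ^ 2 / Q ^ 2 := by
    intro u v hu hv
    have : ∀ w, (pp B u w - 1 / Q) * (pp B v w - 1 / Q) =
      pp B u w * pp B v w - 1 / Q * pp B u w - 1 / Q * pp B v w + 1 / Q ^ 2 * 1 := by
      intro w; field_simp; ring
    simp_rw [this]
    rw [sum_add_distrib, sum_sub_distrib, sum_sub_distrib, ← mul_sum, ← mul_sum, ← mul_sum,
      S.sum_pp hu, S.sum_pp hv, S.sum_all]
    field_simp; ring
  rw [e1]
  have hP2 : 0 ≤ P ^ 2 / Q := by positivity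
  refine (S.schur_dep a ha _ (P ^ 2 / Q) hP2 ?_ ?_).trans ?_
  · intro u v hu hv
    have hv0 : v ≠ 0 := fun h => hv (h ▸ Submodule.zero_mem _)
    rw [e2 u v hu hv0, S.sum_pp_pp hu hv, sub_self]
  · intro u v hu hv _
    rw [e2 u v hu hv]
    have a1 : ∑ w, pp B u w * pp B v w ≤ P ^ 2 / Q := by
      rw [← S.sum_pp hu]
      apply sum_le_sum; intro w _
      nlinarith [pp_nonneg (B := B) u w, pp_le_one (B := B) v w]
    have a2 : 0 ≤ ∑ w, pp B u w * pp B v w :=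
      sum_nonneg fun w _ => mul_nonneg (pp_nonneg u w) (pp_nonneg v w)
    have a3 : P ^ 2 / Q ^ 2 ≤ P ^ 2 / Q := by
      apply div_le_div_of_nonneg_left (by positivity) hQ
      nlinarith [S.hQ2]
    have a4 : 0 ≤ P ^ 2 / Q ^ 2 := by positivity
    rw [abs_le]; constructor <;> linarith
  · apply mul_le_mul_of_nonneg_right _ (sum_nonneg fun _ _ => sq_nonneg _)
    have : P ^ 2 / Q * (Q - 1) = P ^ 2 - P ^ 2 / Q := by field_simp
    linarith

lemma Setup.parseval (S : Setup B n Q P) (a b : V → ℝ) (ha : a 0 = 0) :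
    (∑ v, ∑ w, a v * b w * pp B v w - (∑ v, a v) * (∑ w, b w) / Q) ^ 2 ≤
        P ^ 2 * (∑ v, a v ^ 2) * (∑ w, b w ^ 2) := by
  have e : ∑ v, ∑ w, a v * b w * pp B v w - (∑ v, a v) * (∑ w, b w) / Q =
      ∑ w, (∑ v, a v * (pp B v w - 1 / Q)) * b w := by
    rw [sum_mul_sum, sum_div, ← sum_sub_distrib]
    simp_rw [sum_div, ← sum_sub_distrib, sum_mul]
    rw [sum_comm]
    apply sum_congr rfl; intro u _
    apply sum_congr rfl; intro v _
    ring
  rw [e]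
  refine (sum_mul_sq_le_sq_mul_sq _ _ _).trans ?_
  exact mul_le_mul_of_nonneg_right (S.parseval_sq a ha) (sum_nonneg fun _ _ => sq_nonneg _)

lemma pp_smul {v v' : V} (hv : v' ∈ Submodule.span F {v}) (hv0 : v' ≠ 0) (w : V) :
    pp B v' w = pp B v w := by
  obtain ⟨t, rfl⟩ := Submodule.mem_span_singleton.1 hv
  have ht : t ≠ 0 := by rintro rfl; simp at hv0
  simp [pp, ht]

lemma Setup.parseval1 (S : Setup B n Q P) (b : V → ℝ) (v : V) (hv : v ≠ 0) :
    (Q - 1) * (∑ w, pp B v w * b w - (∑ w, b w) / Q) ^ 2 ≤ P ^ 2 * (∑ w, b w ^ 2) := by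
  have h := S.parseval (ind (Submodule.span F {v})) b (by simp [ind])
  have hs : ∑ u, ind (Submodule.span F {v}) u = Q - 1 := by
    rw [sum_ind, finrank_span_singleton hv, pow_one, S.hQ]
  have hs2 : ∑ u, ind (Submodule.span F {v}) u ^ 2 = Q - 1 := by
    rw [← hs]; apply sum_congr rfl; intro u _; simp only [ind]; split_ifs <;> norm_num
  have hs3 : ∑ u, ∑ w, ind (Submodule.span F {v}) u * b w * pp B u w =
      (Q - 1) * ∑ w, pp B v w * b w := by
    rw [← hs, sum_mul_sum]
    apply sum_congr rfl; intro u _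
    apply sum_congr rfl; intro w _
    simp only [ind]
    split_ifs with hu
    · rw [pp_smul hu.1 hu.2]; ring
    · ring
  rw [hs, hs2, hs3] at h
  have hQ1 : 0 < Q - 1 := by linarith [S.hQ2]
  have : (Q - 1) * ((Q - 1) * (∑ w, pp B v w * b w - (∑ w, b w) / Q) ^ 2) ≤
      (Q - 1) * (P ^ 2 * (∑ w, b w ^ 2)) := by
    calc _ = ((Q - 1) * ∑ w, pp B v w * b w - (Q - 1) * (∑ w, b w) / Q) ^ 2 := by ring
      _ ≤ _ := h
      _ = _ := by ring
  exact le_of_mul_le_mul_left this hQ1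

end Count

section Count2
open Finset
variable {F V : Type} [Field F] [Fintype F] [AddCommGroup V] [Module F V] [Fintype V]
variable {B : V →ₗ[F] V →ₗ[F] F} {n : ℕ} {Q P : ℝ} {J : Finset ℕ} [Fintype (SFlag B J)]

lemma ind_map (g : V ≃ₗ[F] V) (hg : ∀ x y, B (g x) (g y) = B x y) (C : SFlag B J) (i : ℕ) (v : V) :
    ind ((mapFlag g hg C).space i) (g v) = ind (C.space i) v := by
  have : g v ∈ (mapFlag g hg C).space i ↔ v ∈ C.space i := by
    change g v ∈ (C.space i).map (g : V →ₗ[F] V) ↔ _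
    constructor
    · rintro ⟨x, hx, hxv⟩
      have : x = v := g.injective hxv
      rwa [← this]
    · intro h; exact ⟨v, h, rfl⟩
  simp [ind, this]

lemma sum_mapFlag (g : V ≃ₗ[F] V) (hg : ∀ x y, B (g x) (g y) = B x y) (f : SFlag B J → ℝ) :
    ∑ C, f (mapFlag g hg C) = ∑ C, f C :=
  Function.Bijective.sum_comp
    (Finite.injective_iff_bijective.1 (mapFlag_injective g hg)) f

lemma Setup.const1 (S : Setup B n Q P) (i : ℕ) {u u' : V} (hu : u ≠ 0) (hu' : u' ≠ 0) :
    ∑ C : SFlag B J, ind (C.space i) u' = ∑ C : SFlag B J, ind (C.space i) u := by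
  obtain ⟨g, hg, h1⟩ := trans1 S.alt S.nd hu hu'
  rw [← sum_mapFlag g hg]
  simp_rw [← h1, ind_map]

lemma Setup.const2 (S : Setup B n Q P) (i j : ℕ) {u u' v v' : V} (hu : u ≠ 0) (hu' : u' ≠ 0)
    (hv : B u v = 0) (hv' : B u' v' = 0) (hvs : v ∉ Submodule.span F {u})
    (hvs' : v' ∉ Submodule.span F {u'}) :
    ∑ C : SFlag B J, ind (C.space i) u' * ind (C.space j) v' =
      ∑ C : SFlag B J, ind (C.space i) u * ind (C.space j) v := by
  obtain ⟨g, hg, h1, h2⟩ := trans2 S.alt S.nd hu hu' hv hv' hvs hvs'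
  rw [← sum_mapFlag g hg]
  simp_rw [← h1, ← h2, ind_map]

lemma Setup.const3 (S : Setup B n Q P) (i : ℕ) {u u' v v' w w' : V} (hu : u ≠ 0) (hu' : u' ≠ 0)
    (hv : B u v = 0) (hv' : B u' v' = 0) (hvs : v ∉ Submodule.span F {u})
    (hvs' : v' ∉ Submodule.span F {u'})
    (huw : B u w = 0) (huw' : B u' w' = 0) (hvw : B v w = 0) (hvw' : B v' w' = 0)
    (hws : w ∉ Submodule.span F {u, v}) (hws' : w' ∉ Submodule.span F {u', v'}) :
    ∑ C : SFlag B J, ind (C.space i) u' * (ind (C.space i) v' * ind (C.space i) w') =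
      ∑ C : SFlag B J, ind (C.space i) u * (ind (C.space i) v * ind (C.space i) w) := by
  obtain ⟨g, hg, h1, h2, h3⟩ := trans3 S.alt S.nd hu hu' hv hv' hvs hvs' huw huw' hvw hvw' hws hws'
  rw [← sum_mapFlag g hg]
  simp_rw [← h1, ← h2, ← h3, ind_map]

lemma ind_zero (W : Submodule F V) : ind W 0 = 0 := by simp [ind]
lemma ind_nonneg (W : Submodule F V) (v : V) : 0 ≤ ind W v := by
  simp only [ind]; split_ifs <;> norm_num
lemma ind_le_one (W : Submodule F V) (v : V) : ind W v ≤ 1 := by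
  simp only [ind]; split_ifs <;> norm_num
lemma ind_01 (W : Submodule F V) (v : V) : ind W v = 0 ∨ ind W v = 1 := by
  simp only [ind]; split_ifs <;> simp
lemma ind_one {W : Submodule F V} {v : V} (h : ind W v = 1) : v ∈ W ∧ v ≠ 0 := by
  simp only [ind] at h; by_contra hc; rw [if_neg hc] at h; norm_num at h
lemma ee_nonneg (v w : V) : 0 ≤ ee B v w := by
  simp only [ee]; split_ifs <;> norm_num
lemma ee_01 (v w : V) : ee B v w = 0 ∨ ee B v w = 1 := by
  simp only [ee]; split_ifs <;> simp
lemma ee_le_pp (v w : V) : ee B v w ≤ pp B v w := by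
  simp only [ee, pp]
  by_cases h : B v w = 0 <;> by_cases h' : w ∈ Submodule.span F {v} <;> simp [h, h']

lemma Setup.sum_row (S : Setup B n Q P) {i : ℕ} (hi : i ∈ J) (C : SFlag B J) :
    ∑ v, ind (C.space i) v = Q ^ i - 1 := by
  rw [sum_ind, C.finrank_eq i hi, S.hQ]

/-- `N1` double count -/
lemma Setup.count1 (S : Setup B n Q P) {i : ℕ} (hi : i ∈ J) {u : V} (hu : u ≠ 0) :
    (∑ C : SFlag B J, ind (C.space i) u) * (P ^ 2 - 1) =
      (Fintype.card (SFlag B J) : ℝ) * (Q ^ i - 1) := by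
  have h1 : ∑ v, ∑ C : SFlag B J, ind (C.space i) v =
      (Fintype.card (SFlag B J) : ℝ) * (Q ^ i - 1) := by
    rw [sum_comm]
    simp_rw [S.sum_row hi]
    rw [sum_const, card_univ, nsmul_eq_mul]
  rw [← h1]
  have h2 : ∀ v, ∑ C : SFlag B J, ind (C.space i) v =
      (∑ C : SFlag B J, ind (C.space i) u) * ind (⊤ : Submodule F V) v := by
    intro v
    by_cases hv : v = 0
    · subst hv; simp [ind]
    · rw [S.const1 i hu hv]; simp [ind, hv]
  rw [sum_congr rfl (fun v _ => h2 v)]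
  rw [← mul_sum, sum_ind, finrank_top, S.dim, ← S.hQ, S.hP]
  ring

lemma Setup.sum_ind_ee (S : Setup B n Q P) {i : ℕ} (hi : i ∈ J) (C : SFlag B J) {u : V}
    (hu : ind (C.space i) u = 1) :
    ∑ w, ind (C.space i) w * ee B u w = Q ^ i - Q := by
  obtain ⟨h1, h2⟩ := ind_one hu
  have hsub : Submodule.span F {u} ≤ C.space i := by
    rw [Submodule.span_le]; simpa using h1
  have : ∀ w, ind (C.space i) w * ee B u w = mi (C.space i) w - mi (Submodule.span F {u}) w := by
    intro w
    rw [← mi_diff hsub]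
    simp only [ind, ee]
    by_cases hw : w ∈ C.space i
    · have hp := C.isotropic i hi u h1 w hw
      by_cases hw' : w ∈ Submodule.span F {u}
      · simp [hw']
      · have hw0 : w ≠ 0 := fun h => hw' (h ▸ Submodule.zero_mem _)
        simp [hw, hw', hp, hw0]
    · simp [hw]
  simp_rw [this]
  rw [sum_sub_distrib, S.sum_mi, S.sum_mi, C.finrank_eq i hi, finrank_span_singleton h2, pow_one]

lemma Setup.count2_aux (S : Setup B n Q P) (i j : ℕ) {u v : V} (hu : u ≠ 0)
    (hv : ee B u v = 1) :
    (∑ C : SFlag B J, ind (C.space i) u * ind (C.space j) v) * (P ^ 2 / Q - Q) =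
      ∑ C : SFlag B J, ind (C.space i) u * ∑ w, ind (C.space j) w * ee B u w := by
  have hv' : B u v = 0 ∧ v ∉ Submodule.span F {u} := by
    simp only [ee] at hv; by_contra hc; rw [if_neg hc] at hv; norm_num at hv
  simp_rw [mul_sum]
  rw [sum_comm, ← S.sum_ee hu, mul_sum]
  apply sum_congr rfl
  intro w _
  by_cases hw : B u w = 0 ∧ w ∉ Submodule.span F {u}
  · rw [← S.const2 i j hu hu hv'.1 hw.1 hv'.2 hw.2]
    simp [ee, hw]
  · simp [ee, hw]

/-- `N2` double count -/
lemma Setup.count2 (S : Setup B n Q P) {i : ℕ} (hi : i ∈ J) {u v : V} (hu : u ≠ 0)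
    (hv : ee B u v = 1) :
    (∑ C : SFlag B J, ind (C.space i) u * ind (C.space i) v) * (P ^ 2 / Q - Q) =
      (∑ C : SFlag B J, ind (C.space i) u) * (Q ^ i - Q) := by
  rw [S.count2_aux i i hu hv, sum_mul]
  apply sum_congr rfl; intro C _
  rcases ind_01 (C.space i) u with h | h
  · simp [h]
  · rw [S.sum_ind_ee hi C h]

lemma Setup.count2_le (S : Setup B n Q P) (i : ℕ) {j : ℕ} (hj : j ∈ J) {u v : V} (hu : u ≠ 0)
    (hv : ee B u v = 1) :
    (∑ C : SFlag B J, ind (C.space i) u * ind (C.space j) v) * (P ^ 2 / Q - Q) ≤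
      (∑ C : SFlag B J, ind (C.space i) u) * Q ^ j := by
  rw [S.count2_aux i j hu hv, sum_mul]
  apply sum_le_sum; intro C _
  apply mul_le_mul_of_nonneg_left _ (ind_nonneg _ _)
  calc ∑ w, ind (C.space j) w * ee B u w ≤ ∑ w, ind (C.space j) w := by
        apply sum_le_sum; intro w _
        have := ind_nonneg (C.space j) w
        rcases ee_01 (B := B) u w with h | h <;> simp [h, this]
    _ ≤ _ := by rw [S.sum_row hj]; linarith

lemma span_pair_le_perp (hB : IsAltForm B) {u v : V} (huv : B u v = 0) :
    Submodule.span F {u, v} ≤ bperp B (Submodule.span F {u, v}) := by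
  have h2 : B v u = 0 := (alt_zero_comm hB).1 huv
  intro w hw
  obtain ⟨a, b, rfl⟩ := Submodule.mem_span_pair.1 hw
  rw [span_le_bperp]
  intro x hx
  rcases hx with hx | hx
  · subst hx; simp [hB x, huv]
  · rw [Set.mem_singleton_iff] at hx; subst hx; simp [hB x, h2]

/-- `N3` double count -/
lemma Setup.count3 (S : Setup B n Q P) {i : ℕ} (hi : i ∈ J) {u v w : V} (hu : u ≠ 0)
    (hv : B u v = 0) (hvs : v ∉ Submodule.span F {u}) (huw : B u w = 0) (hvw : B v w = 0)
    (hws : w ∉ Submodule.span F {u, v}) :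
    (∑ C : SFlag B J, ind (C.space i) u * (ind (C.space i) v * ind (C.space i) w)) *
      (P ^ 2 / Q ^ 2 - Q ^ 2) =
      (∑ C : SFlag B J, ind (C.space i) u * ind (C.space i) v) * (Q ^ i - Q ^ 2) := by
  set U := Submodule.span F {u, v} with hU
  have hv0 : v ≠ 0 := fun h => hvs (h ▸ Submodule.zero_mem _)
  have hsum : ∑ x, (mi (bperp B U) x - mi U x) = P ^ 2 / Q ^ 2 - Q ^ 2 := by
    rw [sum_sub_distrib, S.sum_perp, S.sum_mi, finrank_pair hu hvs]
  have hle : U ≤ bperp B U := span_pair_le_perp S.alt hv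
  have h1 : ∀ x, (∑ C : SFlag B J, ind (C.space i) u * (ind (C.space i) v * ind (C.space i) w)) *
      (mi (bperp B U) x - mi U x) =
      (∑ C : SFlag B J, ind (C.space i) u * (ind (C.space i) v * ind (C.space i) x)) *
      (mi (bperp B U) x - mi U x) := by
    intro x
    rw [← mi_diff hle]
    by_cases hx : x ∈ bperp B U ∧ x ∉ U
    · have hx' := hx.1
      rw [hU, span_le_bperp] at hx'
      rw [S.const3 i hu hu hv hv hvs hvs huw (hx' u (by simp)) hvw (hx' v (by simp)) hws hx.2]
    · simp [hx]
  rw [← hsum, mul_sum]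
  simp_rw [h1, sum_mul]
  rw [sum_comm]
  apply sum_congr rfl; intro C _
  rcases ind_01 (C.space i) u with h | h
  · simp [h]
  rcases ind_01 (C.space i) v with h' | h'
  · simp [h']
  have hUC : U ≤ C.space i := by
    rw [hU, Submodule.span_le]
    rintro x (hx | hx)
    · subst hx; exact (ind_one h).1
    · rw [Set.mem_singleton_iff] at hx; subst hx; exact (ind_one h').1
  have : ∀ x, ind (C.space i) u * (ind (C.space i) v * ind (C.space i) x) *
      (mi (bperp B U) x - mi U x) = mi (C.space i) x - mi U x := by
    intro x
    rw [h, h', ← mi_diff hle, ← mi_diff hUC]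
    by_cases hx : x ∈ C.space i
    · have hxp : x ∈ bperp B U := by
        rw [mem_bperp_iff]; intro y hy; exact C.isotropic i hi y (hUC hy) x hx
      by_cases hxU : x ∈ U
      · simp [hxU]
      · have hx0 : x ≠ 0 := fun h => hxU (h ▸ Submodule.zero_mem _)
        simp [ind, hx, hxp, hxU, hx0]
    · simp [ind, hx]
  simp_rw [this]
  rw [sum_sub_distrib, S.sum_mi, S.sum_mi, C.finrank_eq i hi, finrank_pair hu hvs, h, h']
  ring

end Count2

section Count3
open Finset
variable {F V : Type} [Field F] [Fintype F] [AddCommGroup V] [Module F V] [Fintype V]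
variable {B : V →ₗ[F] V →ₗ[F] F} {n : ℕ} {Q P : ℝ} {J : Finset ℕ} [Fintype (SFlag B J)]

lemma ee_one {v w : V} (h : ee B v w = 1) : B v w = 0 ∧ w ∉ Submodule.span F {v} := by
  simp only [ee] at h; by_contra hc; rw [if_neg hc] at h; norm_num at h

lemma Setup.parseval0 (S : Setup B n Q P) (z : V → ℝ) (hz : z 0 = 0) (hs : ∑ v, z v = 0) :
    ∑ v, ∑ w, z v * z w * pp B v w ≤ P * ∑ v, z v ^ 2 := by
  have h := S.parseval z z hz
  rw [hs] at h
  have h0 : 0 ≤ ∑ v, z v ^ 2 := sum_nonneg fun _ _ => sq_nonneg _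
  apply le_of_sq_le_sq_aux (mul_nonneg S.P0.le h0)
  calc _ = (∑ v, ∑ w, z v * z w * pp B v w - 0 * 0 / Q) ^ 2 := by simp
    _ ≤ _ := h
    _ = _ := by ring

lemma Setup.G0 (S : Setup B n Q P) {i : ℕ} (hi : i ∈ J) (N1 N2 : ℝ)
    (hN1 : ∀ u : V, u ≠ 0 → ∑ C : SFlag B J, ind (C.space i) u = N1)
    (hN2 : ∀ u v : V, u ≠ 0 → ee B u v = 1 →
      ∑ C : SFlag B J, ind (C.space i) u * ind (C.space i) v = N2)
    (hN20 : 0 ≤ N2) (hNN : N2 * P ≤ N1)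
    (z : V → ℝ) (hz : z 0 = 0) (hs : ∑ v, z v = 0) :
    ∑ C : SFlag B J, (∑ v, ind (C.space i) v * z v) ^ 2 ≤ Q * N1 * ∑ v, z v ^ 2 := by
  set c : V → V → ℝ := fun u v => ∑ C : SFlag B J, ind (C.space i) u * ind (C.space i) v with hc
  have hP1 : 1 ≤ P := by rw [S.hP]; exact one_le_pow₀ (by linarith [S.hQ2])
  have hN21 : N2 ≤ N1 := by nlinarith
  have e1 : ∑ C : SFlag B J, (∑ v, ind (C.space i) v * z v) ^ 2 =
      N2 * ∑ u, ∑ v, z u * z v * pp B u v + ∑ u, ∑ v, z u * z v * (c u v - N2 * pp B u v) := by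
    have : ∑ C : SFlag B J, (∑ v, ind (C.space i) v * z v) ^ 2 = ∑ u, ∑ v, z u * z v * c u v := by
      simp_rw [pow_two, sum_mul_sum, hc, mul_sum]
      rw [sum_comm]
      apply sum_congr rfl; intro u _
      rw [sum_comm]
      apply sum_congr rfl; intro v _
      apply sum_congr rfl; intro w _
      ring
    rw [this]
    simp_rw [mul_sum]
    rw [← sum_add_distrib]
    apply sum_congr rfl; intro u _
    rw [← sum_add_distrib]
    apply sum_congr rfl; intro v _
    ring
  have h1 := S.parseval0 z hz hs
  have h2 := S.schur_dep z hz (fun u v => c u v - N2 * pp B u v) N1 (hN20.trans hN21)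
    (by
      intro u v hu hv
      by_cases hp : B u v = 0
      · have : ee B u v = 1 := by simp [ee, hp, hv]
        simp only [hc]
        rw [hN2 u v hu this]; simp [pp, hp]
      · have : c u v = 0 := by
          apply sum_eq_zero; intro C _
          simp only [ind]
          by_cases h1 : u ∈ C.space i
          · by_cases h2 : v ∈ C.space i
            · exact absurd (C.isotropic i hi u h1 v h2) hp
            · simp [h2]
          · simp [h1]
        rw [this]; simp [pp, hp])
    (by
      intro u v hu hv hd
      have hmem : ∀ C : SFlag B J, ind (C.space i) u * ind (C.space i) v = ind (C.space i) u := by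
        intro C
        obtain ⟨t, rfl⟩ := Submodule.mem_span_singleton.1 hd
        simp only [ind]
        by_cases h1 : u ∈ C.space i
        · have : t • u ∈ C.space i := Submodule.smul_mem _ _ h1
          simp [this, hv]
        · simp [h1]
      have e : c u v = N1 := by simp only [hc, hmem]; exact hN1 u hu
      have hp : pp B u v = 1 := by
        obtain ⟨t, rfl⟩ := Submodule.mem_span_singleton.1 hd
        simp [pp, S.alt u]
      rw [e, hp, abs_le]; constructor <;> linarith)
  have h0 : 0 ≤ ∑ v, z v ^ 2 := sum_nonneg fun _ _ => sq_nonneg _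
  rw [e1]
  have h3 := mul_le_mul_of_nonneg_left h1 hN20
  have h4 := mul_le_mul_of_nonneg_right hNN h0
  calc _ ≤ N2 * (P * ∑ v, z v ^ 2) + N1 * (Q - 1) * ∑ v, z v ^ 2 := add_le_add h3 h2
    _ ≤ N1 * ∑ v, z v ^ 2 + N1 * (Q - 1) * ∑ v, z v ^ 2 := by linarith
    _ = _ := by ring

lemma Setup.G1 (S : Setup B n Q P) {i : ℕ} (hi : i ∈ J) (N2 N3 : ℝ)
    (hN2 : ∀ u v : V, u ≠ 0 → ee B u v = 1 →
      ∑ C : SFlag B J, ind (C.space i) u * ind (C.space i) v = N2)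
    (hN3 : ∀ u v w : V, u ≠ 0 → ee B u v = 1 → B u w = 0 → B v w = 0 →
      w ∉ Submodule.span F {u, v} →
      ∑ C : SFlag B J, ind (C.space i) u * (ind (C.space i) v * ind (C.space i) w) = N3)
    (hN20 : 0 ≤ N2) (hN30 : 0 ≤ N3) (hNN : N3 * P ≤ N2 * Q ^ 2) (hN32 : N3 ≤ N2)
    (u : V) (hu : u ≠ 0)
    (z : V → ℝ) (hz : ∀ w, ee B u w * z w = z w) (hs : ∑ v, z v = 0) :
    ∑ C : SFlag B J, ind (C.space i) u * (∑ v, ind (C.space i) v * z v) ^ 2 ≤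
      2 * Q ^ 2 * N2 * ∑ v, z v ^ 2 := by
  set c : V → V → ℝ := fun v w =>
    ∑ C : SFlag B J, ind (C.space i) u * (ind (C.space i) v * ind (C.space i) w) with hc
  have hQ := S.Q0
  have hE : ∀ v, z v ≠ 0 → ee B u v = 1 := by
    intro v hv
    rcases ee_01 (B := B) u v with h | h
    · have := hz v; rw [h, zero_mul] at this; exact absurd this.symm hv
    · exact h
  have hz0 : z 0 = 0 := by
    by_contra h
    exact (ee_one (hE 0 h)).2 (Submodule.zero_mem _)
  set k : V → V → ℝ := fun v w => c v w - N3 * pp B v w with hk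
  have e1 : ∑ C : SFlag B J, ind (C.space i) u * (∑ v, ind (C.space i) v * z v) ^ 2 =
      N3 * ∑ v, ∑ w, z v * z w * pp B v w + ∑ v, ∑ w, z v * z w * k v w := by
    have : ∑ C : SFlag B J, ind (C.space i) u * (∑ v, ind (C.space i) v * z v) ^ 2 =
        ∑ v, ∑ w, z v * z w * c v w := by
      simp_rw [pow_two, sum_mul_sum, hc, mul_sum]
      rw [sum_comm]
      apply sum_congr rfl; intro v _
      rw [sum_comm]
      apply sum_congr rfl; intro w _
      apply sum_congr rfl; intro C _
      ring
    rw [this]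
    simp_rw [mul_sum]
    rw [← sum_add_distrib]
    apply sum_congr rfl; intro v _
    rw [← sum_add_distrib]
    apply sum_congr rfl; intro w _
    simp only [hk]; ring
  have h1 := S.parseval0 z hz0 hs
  have pt : ∀ v w, z v * z w * k v w ≤
      N2 / 2 * (z v ^ 2 * mi (Submodule.span F {u, v}) w) +
      N2 / 2 * (z w ^ 2 * mi (Submodule.span F {u, w}) v) := by
    intro v w
    have hR : 0 ≤ N2 / 2 * (z v ^ 2 * mi (Submodule.span F {u, v}) w) +
      N2 / 2 * (z w ^ 2 * mi (Submodule.span F {u, w}) v) := by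
      have := mi_nonneg (Submodule.span F {u, v}) w
      have := mi_nonneg (Submodule.span F {u, w}) v
      positivity
    by_cases hv : z v = 0
    · rw [hv] at hR ⊢; simpa using hR
    by_cases hw : z w = 0
    · rw [hw] at hR ⊢; simpa using hR
    have ev := ee_one (hE v hv)
    have ew := ee_one (hE w hw)
    by_cases hd : w ∈ Submodule.span F {u, v}
    · obtain ⟨a, b, hab⟩ := Submodule.mem_span_pair.1 hd
      have hb : b ≠ 0 := by
        rintro rfl
        apply ew.2
        rw [← hab]; simpa using Submodule.smul_mem _ a (Submodule.mem_span_singleton_self u)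
      have hd' : v ∈ Submodule.span F {u, w} := by
        refine Submodule.mem_span_pair.2 ⟨-(b⁻¹ * a), b⁻¹, ?_⟩
        rw [← hab, smul_add, smul_smul, smul_smul, inv_mul_cancel₀ hb, one_smul, neg_smul]
        abel
      have hw0 : w ≠ 0 := fun h => ew.2 (h ▸ Submodule.zero_mem _)
      have hp : pp B v w = 1 := by
        rw [← hab]
        simp [pp, S.alt v, (alt_zero_comm S.alt).1 ev.1]
      have hcc : c v w = N2 := by
        rw [← hN2 u v hu (hE v hv)]
        apply sum_congr rfl; intro C _
        simp only [ind]
        by_cases h1 : u ∈ C.space i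
        · by_cases h2 : v ∈ C.space i
          · have : w ∈ C.space i := by
              rw [← hab]
              exact Submodule.add_mem _ (Submodule.smul_mem _ _ h1) (Submodule.smul_mem _ _ h2)
            simp [this, hw0]
          · simp [h2]
        · simp [h1]
      have hkk : |k v w| ≤ N2 := by
        simp only [hk]; rw [hp, hcc, abs_le]; constructor <;> linarith
      have e1 : mi (Submodule.span F {u, v}) w = 1 := by simp [mi, hd]
      have e2 : mi (Submodule.span F {u, w}) v = 1 := by simp [mi, hd']
      rw [e1, e2]
      calc z v * z w * k v w ≤ |z v * z w| * |k v w| := by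
            rw [← abs_mul]; exact le_abs_self _
        _ ≤ |z v * z w| * N2 := mul_le_mul_of_nonneg_left hkk (abs_nonneg _)
        _ ≤ ((z v ^ 2 + z w ^ 2) / 2) * N2 := by
            apply mul_le_mul_of_nonneg_right _ hN20
            rw [abs_le]; constructor <;> nlinarith [sq_nonneg (z v + z w), sq_nonneg (z v - z w)]
        _ = _ := by ring
    · have : k v w = 0 := by
        simp only [hk]
        by_cases hp : B v w = 0
        · have : c v w = N3 := hN3 u v w hu (hE v hv) ew.1 hp hd
          rw [this]; simp [pp, hp]
        · have : c v w = 0 := by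
            apply sum_eq_zero; intro C _
            simp only [ind]
            by_cases h1 : v ∈ C.space i
            · by_cases h2 : w ∈ C.space i
              · exact absurd (C.isotropic i hi v h1 w h2) hp
              · simp [h2]
            · simp [h1]
          rw [this]; simp [pp, hp]
      rw [this]; simpa using hR
  have s1 : ∑ v, ∑ w, z v ^ 2 * mi (Submodule.span F {u, v}) w ≤ Q ^ 2 * ∑ v, z v ^ 2 := by
    rw [mul_sum]
    apply sum_le_sum
    intro v _
    rw [← mul_sum]
    by_cases hv : z v = 0
    · simp [hv]
    · rw [S.sum_mi, finrank_pair hu (ee_one (hE v hv)).2, mul_comm]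
  have s2 : ∑ v, ∑ w, z w ^ 2 * mi (Submodule.span F {u, w}) v ≤ Q ^ 2 * ∑ v, z v ^ 2 := by
    rw [sum_comm]; exact s1
  have h2 : ∑ v, ∑ w, z v * z w * k v w ≤ N2 * Q ^ 2 * ∑ v, z v ^ 2 := by
    calc _ ≤ ∑ v, ∑ w, (N2 / 2 * (z v ^ 2 * mi (Submodule.span F {u, v}) w) +
        N2 / 2 * (z w ^ 2 * mi (Submodule.span F {u, w}) v)) :=
          sum_le_sum fun u _ => sum_le_sum fun v _ => pt u v
      _ = N2 / 2 * ∑ v, ∑ w, z v ^ 2 * mi (Submodule.span F {u, v}) w +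
          N2 / 2 * ∑ v, ∑ w, z w ^ 2 * mi (Submodule.span F {u, w}) v := by
          simp_rw [sum_add_distrib, mul_sum]
      _ ≤ N2 / 2 * (Q ^ 2 * ∑ v, z v ^ 2) + N2 / 2 * (Q ^ 2 * ∑ v, z v ^ 2) := by
          gcongr
      _ = _ := by ring
  have h0 : 0 ≤ ∑ v, z v ^ 2 := sum_nonneg fun _ _ => sq_nonneg _
  rw [e1]
  have h3 := mul_le_mul_of_nonneg_left h1 hN30
  have h4 := mul_le_mul_of_nonneg_right hNN h0
  calc _ ≤ N3 * (P * ∑ v, z v ^ 2) + N2 * Q ^ 2 * ∑ v, z v ^ 2 := add_le_add h3 h2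
    _ ≤ N2 * Q ^ 2 * ∑ v, z v ^ 2 + N2 * Q ^ 2 * ∑ v, z v ^ 2 := by linarith
    _ = _ := by ring

end Count3

section D1
open Finset
variable {F V : Type} [Field F] [Fintype F] [AddCommGroup V] [Module F V] [Fintype V]
variable {B : V →ₗ[F] V →ₗ[F] F} {n : ℕ} {Q P : ℝ} {J : Finset ℕ} [Fintype (SFlag B J)]

/-- non-opposition indicator at index `i` -/
noncomputable def nopp (i : ℕ) (C C' : SFlag B J) : ℝ :=
  if bperp B (C.space i) ⊓ C'.space i = ⊥ then 0 else 1

lemma nopp_nonneg (i : ℕ) (C C' : SFlag B J) : 0 ≤ nopp i C C' := by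
  simp only [nopp]; split_ifs <;> norm_num

lemma nopp_le_one (i : ℕ) (C C' : SFlag B J) : nopp i C C' ≤ 1 := by
  simp only [nopp]; split_ifs <;> norm_num

lemma ind_inf (U W : Submodule F V) (v : V) : ind W v * mi U v = ind (U ⊓ W) v := by
  simp only [ind, mi, Submodule.mem_inf]
  by_cases h : v ∈ U <;> by_cases h' : v ∈ W <;> simp [h, h']

lemma mi_inf (U W : Submodule F V) (v : V) : mi W v * mi U v = mi (U ⊓ W) v := by
  simp only [mi, Submodule.mem_inf]
  by_cases h : v ∈ U <;> by_cases h' : v ∈ W <;> simp [h, h']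

lemma Setup.sum_ind_ge (S : Setup B n Q P) {W : Submodule F V} (hW : W ≠ ⊥) :
    Q - 1 ≤ ∑ v, ind W v := by
  rw [sum_ind, ← S.hQ]
  have h1 : finrank F W ≠ 0 := by
    intro h; exact hW (Submodule.finrank_eq_zero.1 h)
  have := pow_le_pow_right₀ (show 1 ≤ Q by linarith [S.hQ2]) (Nat.one_le_iff_ne_zero.2 h1)
  rw [pow_one] at this
  linarith

lemma Setup.nopp_le (S : Setup B n Q P) (i : ℕ) (C C' : SFlag B J) :
    (Q - 1) * nopp i C C' ≤ ∑ v, ind (C'.space i) v * mi (bperp B (C.space i)) v := by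
  simp_rw [ind_inf]
  simp only [nopp]
  split_ifs with h
  · rw [mul_zero]; exact sum_nonneg fun _ _ => ind_nonneg _ _
  · rw [mul_one]; exact S.sum_ind_ge h

lemma Setup.mid (S : Setup B n Q P) {W : Submodule F V} {i : ℕ} (hi : finrank F W = i)
    (v : V) :
    (Q ^ i - Q ^ i / Q) * mi (bperp B W) v ≤ ∑ w, ind W w * pp B v w - (Q ^ i / Q - 1) := by
  have hQ := S.Q0
  have e : ∑ w, ind W w * pp B v w = Q ^ finrank F (bperp B (Submodule.span F {v}) ⊓ W : Submodule F V) - 1 := by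
    simp_rw [pp_eq, ind_inf]
    rw [sum_ind, S.hQ]
  rw [e]
  by_cases h : v ∈ bperp B W
  · have : bperp B (Submodule.span F {v}) ⊓ W = W := by
      rw [inf_eq_right]
      intro w hw
      rw [span_le_bperp]
      intro x hx
      rw [Set.mem_singleton_iff] at hx
      subst hx
      exact (alt_zero_comm S.alt).1 ((mem_bperp_iff).1 h w hw)
    rw [this, hi]
    simp only [mi, if_pos h]
    linarith
  · simp only [mi, if_neg h, mul_zero]
    have h1 := finrank_bperp S.alt S.nd (Submodule.span F {v})
    have h2 := Submodule.finrank_sup_add_finrank_inf_eq (bperp B (Submodule.span F {v})) W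
    have h3 := Submodule.finrank_le (bperp B (Submodule.span F {v}) ⊔ W)
    have h4 : finrank F (Submodule.span F {v}) ≤ 1 := (finrank_span_le_card ({v} : Set V)).trans (by simp)
    have h5 : i ≤ finrank F (bperp B (Submodule.span F {v}) ⊓ W : Submodule F V) + 1 := by omega
    have h6 := pow_le_pow_right₀ (show 1 ≤ Q by linarith [S.hQ2]) h5
    rw [pow_succ] at h6
    have : Q ^ i / Q ≤ Q ^ finrank F (bperp B (Submodule.span F {v}) ⊓ W : Submodule F V) := by
      rw [div_le_iff₀ hQ]; exact h6
    linarith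

lemma Setup.step1 (S : Setup B n Q P) {i : ℕ} (hi : i ∈ J) (𝓕 : Finset (SFlag B J)) :
    (Q - 1) ^ 2 * Q ^ i * ∑ C ∈ 𝓕, ∑ C' ∈ 𝓕, nopp i C C' ≤
      Q * Q ^ i * (#𝓕 : ℝ) ^ 2 + P * Q * ∑ v, (∑ C ∈ 𝓕, ind (C.space i) v) ^ 2 := by
  have hQ := S.Q0
  have hQ2 := S.hQ2
  have hP := S.P0
  set K := Q ^ i with hK
  have hK1 : 1 ≤ K := one_le_pow₀ (by linarith)
  set X : V → ℝ := fun v => ∑ C ∈ 𝓕, ind (C.space i) v with hX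
  set Z : V → ℝ := fun v => ∑ C ∈ 𝓕, mi (bperp B (C.space i)) v with hZ
  set f : ℝ := (#𝓕 : ℝ) with hf
  have hX0 : ∀ v, 0 ≤ X v := fun v => sum_nonneg fun _ _ => ind_nonneg _ _
  have h1 : (Q - 1) * ∑ C ∈ 𝓕, ∑ C' ∈ 𝓕, nopp i C C' ≤ ∑ v, X v * Z v := by
    calc _ = ∑ C ∈ 𝓕, ∑ C' ∈ 𝓕, (Q - 1) * nopp i C C' := by simp_rw [mul_sum]
      _ ≤ ∑ C ∈ 𝓕, ∑ C' ∈ 𝓕, ∑ v, ind (C'.space i) v * mi (bperp B (C.space i)) v :=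
        sum_le_sum fun C _ => sum_le_sum fun C' _ => S.nopp_le i C C'
      _ = ∑ v, ∑ C' ∈ 𝓕, ∑ C ∈ 𝓕, ind (C'.space i) v * mi (bperp B (C.space i)) v := by
        rw [sum_comm, sum_comm]
        simp_rw [sum_comm (s := 𝓕) (t := univ)]
        apply sum_congr rfl; intro v _
        rw [sum_comm]
      _ = _ := by
        apply sum_congr rfl; intro v _
        rw [hX, hZ, sum_mul_sum]
  have h2 : ∀ v, (K - K / Q) * Z v ≤ ∑ w, X w * pp B v w - (K / Q - 1) * f := by
    intro v
    calc _ = ∑ C ∈ 𝓕, (K - K / Q) * mi (bperp B (C.space i)) v := by rw [hZ, mul_sum]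
      _ ≤ ∑ C ∈ 𝓕, (∑ w, ind (C.space i) w * pp B v w - (K / Q - 1)) :=
        sum_le_sum fun C _ => S.mid (C.finrank_eq i hi) v
      _ = _ := by
        rw [sum_sub_distrib, sum_const, nsmul_eq_mul, sum_comm]
        simp_rw [hX, sum_mul]
        rw [hf]; ring
  have h3 : ∑ v, X v = (K - 1) * f := by
    rw [hX, sum_comm]
    simp_rw [S.sum_row hi]
    rw [sum_const, nsmul_eq_mul, hf]; ring
  have h4 : (K - K / Q) * ∑ v, X v * Z v ≤
      ∑ v, ∑ w, X v * X w * pp B v w - (K / Q - 1) * f * ((K - 1) * f) := by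
    rw [← h3, mul_sum, mul_sum, ← sum_sub_distrib]
    apply sum_le_sum; intro v _
    calc _ = X v * ((K - K / Q) * Z v) := by ring
      _ ≤ X v * (∑ w, X w * pp B v w - (K / Q - 1) * f) := mul_le_mul_of_nonneg_left (h2 v) (hX0 v)
      _ = _ := by
        rw [mul_sub, mul_sum]
        congr 1
        · apply sum_congr rfl; intro w _; ring
        · ring
  have hXz : X 0 = 0 := by rw [hX]; exact sum_eq_zero fun C _ => ind_zero _
  have hS0 : 0 ≤ ∑ v, X v ^ 2 := sum_nonneg fun _ _ => sq_nonneg _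
  have h5 : ∑ v, ∑ w, X v * X w * pp B v w - (∑ v, X v) * (∑ w, X w) / Q ≤ P * ∑ v, X v ^ 2 := by
    apply le_of_sq_le_sq_aux (mul_nonneg hP.le hS0)
    refine (S.parseval X X hXz).trans (le_of_eq ?_)
    ring
  rw [h3] at h5
  have h6 : (K - K / Q) * ((Q - 1) * ∑ C ∈ 𝓕, ∑ C' ∈ 𝓕, nopp i C C') ≤
      (K - K / Q) * ∑ v, X v * Z v := by
    apply mul_le_mul_of_nonneg_left h1
    rw [sub_nonneg, div_le_iff₀ hQ]; nlinarith
  set T := ∑ C ∈ 𝓕, ∑ C' ∈ 𝓕, nopp i C C'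
  set S2 := ∑ v, X v ^ 2
  have h7 : (K - K / Q) * ((Q - 1) * T) ≤ (K - 1) * f * ((K - 1) * f) / Q + P * S2 -
      (K / Q - 1) * f * ((K - 1) * f) := by linarith
  have h8 := mul_le_mul_of_nonneg_left h7 hQ.le
  have e1 : Q * ((K - K / Q) * ((Q - 1) * T)) = (Q - 1) ^ 2 * K * T := by
    field_simp
  have e2 : Q * ((K - 1) * f * ((K - 1) * f) / Q + P * S2 - (K / Q - 1) * f * ((K - 1) * f)) =
      (K - 1) * (Q - 1) * f ^ 2 + P * Q * S2 := by
    field_simp; ring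
  rw [e1, e2] at h8
  nlinarith [mul_nonneg (show 0 ≤ K + Q - 1 by linarith) (sq_nonneg f)]

lemma Setup.exists_level (S : Setup B n Q P) (hJ : #J ≤ n) (hQn : 16 * (n:ℝ) ≤ Q)
    (𝓕 : Finset (SFlag B J)) (hf : 0 < (#𝓕 : ℝ))
    (hE : ∀ C ∈ 𝓕, ∀ C' ∈ 𝓕, ¬ FlagOpp C C') :
    ∃ j ∈ J, Q * Q ^ j * (#𝓕 : ℝ) ^ 2 ≤
      4 * (n:ℝ) * P * ∑ v, (∑ C ∈ 𝓕, ind (C.space j) v) ^ 2 := by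
  by_contra hc
  push Not at hc
  have hQ := S.Q0
  have hn : (3:ℝ) ≤ n := by exact_mod_cast S.hn
  set f : ℝ := (#𝓕 : ℝ) with hfd
  have h1 : f ^ 2 ≤ ∑ j ∈ J, ∑ C ∈ 𝓕, ∑ C' ∈ 𝓕, nopp j C C' := by
    rw [sum_comm]
    simp_rw [sum_comm (s := J) (t := 𝓕)]
    have : ∀ C ∈ 𝓕, ∀ C' ∈ 𝓕, 1 ≤ ∑ j ∈ J, nopp j C C' := by
      intro C hC C' hC'
      have := hE C hC C' hC'
      simp only [FlagOpp] at this
      push Not at this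
      obtain ⟨i, hi, hne⟩ := this
      calc (1:ℝ) = nopp i C C' := by simp only [nopp]; rw [if_neg hne]
        _ ≤ _ := single_le_sum (f := fun j => nopp j C C') (fun j _ => nopp_nonneg j C C') hi
    calc f ^ 2 = ∑ C ∈ 𝓕, ∑ C' ∈ 𝓕, (1:ℝ) := by simp [hfd, pow_two]
      _ ≤ _ := sum_le_sum fun C hC => sum_le_sum fun C' hC' => this C hC C' hC'
  have h2 : ∀ j ∈ J, (Q - 1) ^ 2 * ∑ C ∈ 𝓕, ∑ C' ∈ 𝓕, nopp j C C' ≤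
      Q * f ^ 2 + Q ^ 2 * f ^ 2 / (4 * n) := by
    intro j hj
    have hK : 0 < Q ^ j := pow_pos hQ _
    have a := S.step1 hj 𝓕
    have b := hc j hj
    set S2 := ∑ v, (∑ C ∈ 𝓕, ind (C.space j) v) ^ 2
    set T := ∑ C ∈ 𝓕, ∑ C' ∈ 𝓕, nopp j C C'
    set K := Q ^ j
    have b' : P * S2 ≤ Q * K * f ^ 2 / (4 * n) := by
      rw [le_div_iff₀ (by linarith)]; linarith
    have b2 := mul_le_mul_of_nonneg_left b' hQ.le
    have : K * ((Q - 1) ^ 2 * T) ≤ K * (Q * f ^ 2 + Q ^ 2 * f ^ 2 / (4 * n)) := by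
      calc _ = (Q - 1) ^ 2 * K * T := by ring
        _ ≤ Q * K * f ^ 2 + P * Q * S2 := a
        _ ≤ Q * K * f ^ 2 + Q * (Q * K * f ^ 2 / (4 * n)) := by linarith
        _ = _ := by ring
    exact le_of_mul_le_mul_left this hK
  have h3 := sum_le_sum h2
  rw [← mul_sum, sum_const, nsmul_eq_mul] at h3
  have h4 : (Q - 1) ^ 2 * f ^ 2 ≤ n * (Q * f ^ 2 + Q ^ 2 * f ^ 2 / (4 * n)) := by
    calc _ ≤ _ := mul_le_mul_of_nonneg_left h1 (sq_nonneg _)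
      _ ≤ _ := h3
      _ ≤ _ := by
        apply mul_le_mul_of_nonneg_right (by exact_mod_cast hJ)
        positivity
  have e : n * (Q * f ^ 2 + Q ^ 2 * f ^ 2 / (4 * n)) = f ^ 2 * (n * Q + Q ^ 2 / 4) := by
    field_simp
  rw [e] at h4
  have h5 : (Q - 1) ^ 2 ≤ n * Q + Q ^ 2 / 4 := by
    apply le_of_mul_le_mul_left _ (show 0 < f ^ 2 by positivity)
    linarith
  nlinarith
end D1

section D2
open Finset
variable {F V : Type} [Field F] [Fintype F] [AddCommGroup V] [Module F V] [Fintype V]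
variable {B : V →ₗ[F] V →ₗ[F] F} {n : ℕ} {Q P : ℝ} {J : Finset ℕ} [Fintype (SFlag B J)]

lemma flag_perp (C : SFlag B J) {i j : ℕ} (hi : i ∈ J) (hj : j ∈ J) {x y : V}
    (hx : x ∈ C.space i) (hy : y ∈ C.space j) : B x y = 0 := by
  rcases le_total i j with h | h
  · exact C.isotropic j hj x (C.mono i hi j hj h hx) y hy
  · exact C.isotropic i hi x hx y (C.mono j hj i hi h hy)

lemma Setup.M2le (S : Setup B n Q P) {i : ℕ} (j : ℕ) (hi : i ∈ J) {u v : V} (hu : u ≠ 0)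
    (hv : ee B u v = 1) :
    (∑ C : SFlag B J, ind (C.space j) u * ind (C.space i) v) * P ^ 2 ≤
      2 * Q * Q ^ i * ∑ C : SFlag B J, ind (C.space j) u := by
  have h := S.count2_le j hi hu hv
  have hQ := S.Q0
  have hQ2 := S.hQ2
  have hQP := S.QP
  set M := ∑ C : SFlag B J, ind (C.space j) u * ind (C.space i) v
  have hM : 0 ≤ M := sum_nonneg fun _ _ => mul_nonneg (ind_nonneg _ _) (ind_nonneg _ _)
  set N1 := ∑ C : SFlag B J, ind (C.space j) u
  have h1 : Q ^ 2 ≤ P ^ 2 / 2 := by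
    have : Q ^ 2 * 2 ≤ P := by
      calc Q ^ 2 * 2 ≤ Q ^ 2 * Q := mul_le_mul_of_nonneg_left hQ2 (sq_nonneg _)
        _ = Q ^ 3 := by ring
        _ ≤ P := hQP
    have : 1 ≤ P := by nlinarith
    nlinarith
  have h2 : P ^ 2 ≤ 2 * Q * (P ^ 2 / Q - Q) := by
    have : 2 * Q * (P ^ 2 / Q - Q) = 2 * P ^ 2 - 2 * Q ^ 2 := by field_simp
    rw [this]; linarith
  calc M * P ^ 2 ≤ M * (2 * Q * (P ^ 2 / Q - Q)) := mul_le_mul_of_nonneg_left h2 hM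
    _ = 2 * Q * (M * (P ^ 2 / Q - Q)) := by ring
    _ ≤ 2 * Q * (N1 * Q ^ i) := mul_le_mul_of_nonneg_left h (by positivity)
    _ = _ := by ring

lemma Setup.T1 (S : Setup B n Q P) {i j : ℕ} (hi : i ∈ J) (hj : j ∈ J) (hi2 : 2 ≤ i)
    {u u' : V} (hu : u ≠ 0) (huu : u' ∉ Submodule.span F {u}) :
    (∑ C : SFlag B J, ind (C.space j) u * mi (bperp B (C.space i)) u') * Q ≤
      4 * ∑ C : SFlag B J, ind (C.space j) u := by
  have hQ := S.Q0
  have hQ2 := S.hQ2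
  have hP := S.P0
  set K := Q ^ i with hK
  have hK0 : 0 < K := pow_pos hQ _
  set N1 := ∑ C : SFlag B J, ind (C.space j) u
  set T := ∑ C : SFlag B J, ind (C.space j) u * mi (bperp B (C.space i)) u'
  have hT : 0 ≤ T := sum_nonneg fun _ _ => mul_nonneg (ind_nonneg _ _) (mi_nonneg _ _)
  have hKQ : K / 2 ≤ K - Q := by
    have : Q ^ 2 ≤ K := pow_le_pow_right₀ (by linarith) hi2
    nlinarith
  have h1 : (K - Q) * T ≤ ∑ C : SFlag B J, ∑ v, ind (C.space j) u *
      (ind (C.space i) v * (ee B u v * pp B u' v)) := by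
    rw [mul_sum]
    apply sum_le_sum; intro C _
    rw [← mul_sum]
    rcases ind_01 (C.space j) u with h | h
    · simp [h]
    rw [h, one_mul, one_mul]
    obtain ⟨hu1, -⟩ := ind_one h
    by_cases h' : u' ∈ bperp B (C.space i)
    · simp only [mi, if_pos h', mul_one]
      have e : ∀ v, mi (C.space i) v - mi (Submodule.span F {u}) v ≤
          ind (C.space i) v * (ee B u v * pp B u' v) := by
        intro v
        by_cases hv : v ∈ C.space i
        · by_cases hvs : v ∈ Submodule.span F {u}
          · have : 0 ≤ ind (C.space i) v * (ee B u v * pp B u' v) :=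
              mul_nonneg (ind_nonneg _ _) (mul_nonneg (ee_nonneg _ _) (pp_nonneg _ _))
            simpa [mi, hv, hvs] using this
          · have hv0 : v ≠ 0 := fun h => hvs (h ▸ Submodule.zero_mem _)
            have a1 : B u v = 0 := flag_perp C hj hi hu1 hv
            have a2 : B u' v = 0 := (alt_zero_comm S.alt).1 (mem_bperp_iff.1 h' v hv)
            simp [mi, ind, ee, pp, hv, hvs, hv0, a1, a2]
        · have : 0 ≤ ind (C.space i) v * (ee B u v * pp B u' v) :=
              mul_nonneg (ind_nonneg _ _) (mul_nonneg (ee_nonneg _ _) (pp_nonneg _ _))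
          have a := mi_nonneg (Submodule.span F {u}) v
          have b : mi (C.space i) v = 0 := by simp [mi, hv]
          linarith
      have s := sum_le_sum fun v (_ : v ∈ univ) => e v
      rw [sum_sub_distrib, S.sum_mi, S.sum_mi, C.finrank_eq i hi, finrank_span_singleton hu,
        pow_one] at s
      exact s
    · simp only [mi, if_neg h', mul_zero]
      exact sum_nonneg fun v _ =>
        mul_nonneg (ind_nonneg _ _) (mul_nonneg (ee_nonneg _ _) (pp_nonneg _ _))
  have h2 : (∑ C : SFlag B J, ∑ v, ind (C.space j) u *
      (ind (C.space i) v * (ee B u v * pp B u' v))) * P ^ 2 ≤ 2 * Q * K * N1 * (P ^ 2 / Q ^ 2) := by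
    rw [sum_comm, ← S.sum_pp_pp hu huu, sum_mul, mul_sum]
    apply sum_le_sum; intro v _
    rcases ee_01 (B := B) u v with h | h
    · simp only [h, zero_mul, mul_zero, sum_const_zero]
      refine mul_nonneg (mul_nonneg (by positivity) (sum_nonneg fun _ _ => ind_nonneg _ _))
        (mul_nonneg (pp_nonneg _ _) (pp_nonneg _ _))
    · have m := S.M2le j hi hu h
      have p1 : pp B u v = 1 := by simp [pp, (ee_one h).1]
      rw [h, p1, one_mul]
      calc _ = (∑ C : SFlag B J, ind (C.space j) u * ind (C.space i) v) * P ^ 2 * pp B u' v := by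
            rw [sum_mul, sum_mul, sum_mul]
            apply sum_congr rfl; intro C _; ring
        _ ≤ _ := mul_le_mul_of_nonneg_right m (pp_nonneg _ _)
  have h3 : K / 2 * T ≤ 2 * Q * K * N1 / Q ^ 2 := by
    have h4 : K / 2 * T * P ^ 2 ≤ 2 * Q * K * N1 / Q ^ 2 * P ^ 2 := by
      calc _ ≤ ((K - Q) * T) * P ^ 2 := by gcongr
        _ ≤ _ := mul_le_mul_of_nonneg_right h1 (sq_nonneg _)
        _ ≤ _ := h2
        _ = _ := by ring
    exact le_of_mul_le_mul_right h4 (by positivity)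
  have e : 2 * Q * K * N1 / Q ^ 2 = K / 2 * (4 * N1 / Q) := by field_simp; ring
  rw [e] at h3
  have := le_of_mul_le_mul_left h3 (by positivity)
  rwa [le_div_iff₀ hQ] at this

lemma Setup.sum_pp_perp (S : Setup B n Q P) {W : Submodule F V} {i : ℕ} (hi : finrank F W = i)
    {u : V} (hu : u ≠ 0) :
    ∑ v, pp B u v * mi (bperp B W) v ≤ P ^ 2 / Q ^ (i + 1) + P ^ 2 / Q ^ i * ind W u := by
  have hQ := S.Q0
  have e : ∀ v, pp B u v * mi (bperp B W) v ≤ mi (bperp B (W ⊔ Submodule.span F {u})) v := by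
    intro v
    by_cases h1 : B u v = 0
    · by_cases h2 : v ∈ bperp B W
      · have : v ∈ bperp B (W ⊔ Submodule.span F {u}) := by
          rw [mem_bperp_iff]
          intro x hx
          obtain ⟨y, hy, z, hz, rfl⟩ := Submodule.mem_sup.1 hx
          obtain ⟨a, rfl⟩ := Submodule.mem_span_singleton.1 hz
          simp [mem_bperp_iff.1 h2 y hy, h1]
        simp [pp, mi, h1, h2, this]
      · simp only [mi, if_neg h2, mul_zero]; split_ifs <;> norm_num
    · simp only [pp, if_neg h1, zero_mul]; exact mi_nonneg _ _
  refine (sum_le_sum fun v _ => e v).trans ?_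
  rw [S.sum_perp]
  have h1Q : 1 ≤ Q := by linarith [S.hQ2]
  by_cases h : u ∈ W
  · have a : i ≤ finrank F (W ⊔ Submodule.span F {u} : Submodule F V) := by
      rw [← hi]; exact Submodule.finrank_mono le_sup_left
    simp only [ind, h, hu, ne_eq, not_false_eq_true, and_self, if_true, mul_one]
    have : P ^ 2 / Q ^ finrank F (W ⊔ Submodule.span F {u} : Submodule F V) ≤ P ^ 2 / Q ^ i := by
      gcongr
    have : 0 ≤ P ^ 2 / Q ^ (i + 1) := by positivity
    linarith
  · have a : i + 1 ≤ finrank F (W ⊔ Submodule.span F {u} : Submodule F V) := by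
      rw [← hi]
      apply Submodule.finrank_lt_finrank_of_lt
      apply lt_of_le_of_ne le_sup_left
      intro hc
      apply h
      rw [hc]
      exact Submodule.mem_sup_right (Submodule.mem_span_singleton_self u)
    have : P ^ 2 / Q ^ finrank F (W ⊔ Submodule.span F {u} : Submodule F V) ≤
        P ^ 2 / Q ^ (i + 1) := by
      gcongr
    have h0 : ind W u = 0 := by simp [ind, h]
    rw [h0]; linarith

lemma Setup.T2 (S : Setup B n Q P) {i j : ℕ} (hi : i ∈ J) (hj : j ∈ J) (hiP : Q ^ i * Q ≤ P)
    {u u' : V} (hu : u ≠ 0) (hu' : u' ≠ 0) (huu : u' ∉ Submodule.span F {u}) :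
    (∑ C : SFlag B J, ∑ C' : SFlag B J, ind (C.space j) u * (ind (C'.space j) u' *
      ∑ v, ind (C'.space i) v * ee B u' v * mi (bperp B (C.space i)) v)) ≤
      6 * (∑ C : SFlag B J, ind (C.space j) u) ^ 2 := by
  have hQ := S.Q0
  have hQ2 := S.hQ2
  have hP := S.P0
  have hQP := S.QP
  set K := Q ^ i with hK
  have hK0 : 0 < K := pow_pos hQ _
  set N1 := ∑ C : SFlag B J, ind (C.space j) u with hN1
  have hN10 : 0 ≤ N1 := sum_nonneg fun _ _ => ind_nonneg _ _
  have hN1' : ∑ C : SFlag B J, ind (C.space j) u' = N1 := S.const1 j hu hu'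
  set M := 2 * Q * K * N1 / P ^ 2 with hM
  have hM0 : 0 ≤ M := by positivity
  have key : ∀ C : SFlag B J, ∑ C' : SFlag B J, ind (C.space j) u * (ind (C'.space j) u' *
      ∑ v, ind (C'.space i) v * ee B u' v * mi (bperp B (C.space i)) v) ≤
      ind (C.space j) u * (M * (P ^ 2 / (K * Q) + P ^ 2 / K * ind (C.space i) u')) := by
    intro C
    rw [← mul_sum]
    apply mul_le_mul_of_nonneg_left _ (ind_nonneg _ _)
    have h := S.sum_pp_perp (C.finrank_eq i hi) hu'
    rw [pow_succ] at h
    refine le_trans ?_ (mul_le_mul_of_nonneg_left h hM0)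
    simp_rw [mul_sum]
    rw [sum_comm]
    apply sum_le_sum; intro v _
    rcases ee_01 (B := B) u' v with h | h
    · simp only [h, zero_mul, mul_zero, sum_const_zero]
      exact mul_nonneg hM0 (mul_nonneg (pp_nonneg _ _) (mi_nonneg _ _))
    · have m := S.M2le j hi hu' h
      rw [hN1'] at m
      have m' : ∑ C : SFlag B J, ind (C.space j) u' * ind (C.space i) v ≤ M := by
        rw [hM, le_div_iff₀ (by positivity)]; exact m
      have p1 : pp B u' v = 1 := by simp [pp, (ee_one h).1]
      rw [h, p1, one_mul]
      calc _ = (∑ C : SFlag B J, ind (C.space j) u' * ind (C.space i) v) *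
            mi (bperp B (C.space i)) v := by
            rw [sum_mul]
            apply sum_congr rfl; intro C _; ring
        _ ≤ _ := mul_le_mul_of_nonneg_right m' (mi_nonneg _ _)
  have h2 : ∑ C : SFlag B J, ind (C.space j) u * ind (C.space i) u' ≤ M := by
    by_cases hb : B u u' = 0
    · have m := S.M2le j hi hu (v := u') (by simp [ee, hb, huu])
      rw [hM, le_div_iff₀ (by positivity)]; exact m
    · refine le_trans (le_of_eq ?_) hM0
      apply sum_eq_zero
      intro C _
      rcases ind_01 (C.space j) u with h | h
      · rw [h, zero_mul]
      rcases ind_01 (C.space i) u' with h' | h'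
      · rw [h', mul_zero]
      exact absurd (flag_perp C hj hi (ind_one h).1 (ind_one h').1) hb
  refine (sum_le_sum fun C _ => key C).trans ?_
  have e : ∑ C : SFlag B J, ind (C.space j) u *
      (M * (P ^ 2 / (K * Q) + P ^ 2 / K * ind (C.space i) u')) =
      M * (P ^ 2 / (K * Q)) * N1 + M * (P ^ 2 / K) *
        ∑ C : SFlag B J, ind (C.space j) u * ind (C.space i) u' := by
    rw [hN1, mul_sum, mul_sum, ← sum_add_distrib]
    apply sum_congr rfl; intro C _; ring
  rw [e]
  have e1 : M * (P ^ 2 / (K * Q)) * N1 = 2 * N1 ^ 2 := by rw [hM]; field_simp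
  have e2 : M * (P ^ 2 / K) * M = N1 ^ 2 * (4 * (Q ^ 2 * K) / P ^ 2) := by
    rw [hM]; field_simp; ring
  have e3 : 4 * (Q ^ 2 * K) / P ^ 2 ≤ 4 := by
    rw [div_le_iff₀ (by positivity)]
    have : Q ≤ P := by nlinarith
    nlinarith [mul_le_mul hiP this hQ.le hP.le]
  have e4 : M * (P ^ 2 / K) * ∑ C : SFlag B J, ind (C.space j) u * ind (C.space i) u' ≤
      M * (P ^ 2 / K) * M := mul_le_mul_of_nonneg_left h2 (by positivity)
  have e5 := mul_le_mul_of_nonneg_left e3 (sq_nonneg N1)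
  linarith

lemma Setup.nopp_split (S : Setup B n Q P) {i j : ℕ} (hi : i ∈ J) (hj : j ∈ J) {u' : V}
    (C C' : SFlag B J) (hu : ind (C'.space j) u' = 1) :
    nopp i C C' ≤ mi (bperp B (C.space i)) u' + (1 / (Q - 1)) *
      ∑ v, ind (C'.space i) v * ee B u' v * mi (bperp B (C.space i)) v := by
  have hQ2 := S.hQ2
  have hQ1 : 0 < Q - 1 := by linarith
  have hS : 0 ≤ ∑ v, ind (C'.space i) v * ee B u' v * mi (bperp B (C.space i)) v :=
    sum_nonneg fun v _ => mul_nonneg (mul_nonneg (ind_nonneg _ _) (ee_nonneg _ _)) (mi_nonneg _ _)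
  by_cases h : u' ∈ bperp B (C.space i)
  · have : mi (bperp B (C.space i)) u' = 1 := by simp [mi, h]
    rw [this]
    have := nopp_le_one i C C'
    have : 0 ≤ (1 / (Q - 1)) *
      ∑ v, ind (C'.space i) v * ee B u' v * mi (bperp B (C.space i)) v := by positivity
    linarith
  · have : mi (bperp B (C.space i)) u' = 0 := by simp [mi, h]
    rw [this, zero_add, one_div, inv_mul_eq_div, le_div_iff₀ hQ1, mul_comm]
    refine (S.nopp_le i C C').trans (sum_le_sum fun v _ => ?_)
    by_cases h1 : v ∈ C'.space i ∧ v ≠ 0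
    · by_cases h2 : v ∈ bperp B (C.space i)
      · have a1 : B u' v = 0 := flag_perp C' hj hi (ind_one hu).1 h1.1
        have a2 : v ∉ Submodule.span F {u'} := by
          intro hc
          obtain ⟨t, rfl⟩ := Submodule.mem_span_singleton.1 hc
          have ht : t ≠ 0 := by rintro rfl; simp at h1
          exact h ((Submodule.smul_mem_iff _ ht).1 h2)
        simp [ee, a1, a2]
      · simp [mi, h2]
    · simp [ind, h1]

lemma Setup.step5 (S : Setup B n Q P) {i j : ℕ} (hi : i ∈ J) (hj : j ∈ J) (hi2 : 2 ≤ i)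
    (hiP : Q ^ i * Q ≤ P)
    {u u' : V} (hu : u ≠ 0) (hu' : u' ≠ 0) (huu : u' ∉ Submodule.span F {u}) :
    (∑ C : SFlag B J, ∑ C' : SFlag B J, ind (C.space j) u * (ind (C'.space j) u' *
      nopp i C C')) * Q ≤ 16 * (∑ C : SFlag B J, ind (C.space j) u) ^ 2 := by
  have hQ := S.Q0
  have hQ2 := S.hQ2
  have hQ1 : 0 < Q - 1 := by linarith
  have t1 := S.T1 hi hj hi2 hu huu
  have t2 := S.T2 hi hj hiP hu hu' huu
  set N1 := ∑ C : SFlag B J, ind (C.space j) u with hN1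
  have hN10 : 0 ≤ N1 := sum_nonneg fun _ _ => ind_nonneg _ _
  have hN1' : ∑ C : SFlag B J, ind (C.space j) u' = N1 := S.const1 j hu hu'
  set A := ∑ C : SFlag B J, ind (C.space j) u * mi (bperp B (C.space i)) u' with hA
  set D := ∑ C : SFlag B J, ∑ C' : SFlag B J, ind (C.space j) u * (ind (C'.space j) u' *
      ∑ v, ind (C'.space i) v * ee B u' v * mi (bperp B (C.space i)) v) with hD
  have h : ∑ C : SFlag B J, ∑ C' : SFlag B J, ind (C.space j) u * (ind (C'.space j) u' *
      nopp i C C') ≤ A * N1 + 1 / (Q - 1) * D := by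
    rw [← hN1', hA, hD, sum_mul_sum, mul_sum, ← sum_add_distrib]
    apply sum_le_sum; intro C _
    rw [mul_sum, ← sum_add_distrib]
    apply sum_le_sum; intro C' _
    rcases ind_01 (C'.space j) u' with h | h
    · simp [h]
    · have := mul_le_mul_of_nonneg_left (S.nopp_split hi hj C C' h) (ind_nonneg (C.space j) u)
      rw [h, one_mul, one_mul, mul_one]
      refine this.trans (le_of_eq ?_)
      ring
  have h1 : 1 / (Q - 1) * D * Q ≤ 12 * N1 ^ 2 := by
    have hq : Q / (Q - 1) ≤ 2 := by rw [div_le_iff₀ hQ1]; linarith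
    calc 1 / (Q - 1) * D * Q = Q / (Q - 1) * D := by ring
      _ ≤ Q / (Q - 1) * (6 * N1 ^ 2) := mul_le_mul_of_nonneg_left t2 (by positivity)
      _ ≤ 2 * (6 * N1 ^ 2) := mul_le_mul_of_nonneg_right hq (by positivity)
      _ = _ := by ring
  have h2 := mul_le_mul_of_nonneg_right h hQ.le
  have h3 := mul_le_mul_of_nonneg_right t1 hN10
  nlinarith
end D2

section D3
open Finset
variable {F V : Type} [Field F] [Fintype F] [AddCommGroup V] [Module F V] [Fintype V]
variable {B : V →ₗ[F] V →ₗ[F] F} {n : ℕ} {Q P : ℝ} {J : Finset ℕ} [Fintype (SFlag B J)]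

set_option maxHeartbeats 2000000 in
lemma Setup.high (S : Setup B n Q P) (hQn : 2 ^ 26 * (n:ℝ) ^ 4 ≤ Q) {j : ℕ} (hj : j ∈ J)
    (hj2 : 2 ≤ j) (hjn : j + 1 ≤ n) (𝓕 : Finset (SFlag B J)) (hf : 0 < (#𝓕 : ℝ))
    (N1 : ℝ) (hN1 : ∀ u : V, u ≠ 0 → ∑ C : SFlag B J, ind (C.space j) u = N1)
    (hN10 : 0 < N1) (hcount : N1 * (P ^ 2 - 1) = (Fintype.card (SFlag B J) : ℝ) * (Q ^ j - 1))
    (hbig : (Fintype.card (SFlag B J) : ℝ) ≤ #𝓕 * (P + 1))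
    (hS1 : Q * Q ^ j * (#𝓕 : ℝ) ^ 2 ≤
      4 * (n:ℝ) * P * ∑ v, (∑ C ∈ 𝓕, ind (C.space j) v) ^ 2) :
    Q ≤ #{v | 1 / (2 ^ 23 * (n:ℝ) ^ 3) * N1 < ∑ C ∈ 𝓕, ind (C.space j) v} := by
  have hQ := S.Q0
  have hQ2 := S.hQ2
  have hP := S.P0
  have hQP := S.QP
  have hn : (3:ℝ) ≤ n := by exact_mod_cast S.hn
  have h1Q : 1 ≤ Q := by linarith
  have hKQ : Q ^ j * Q ≤ P := by
    rw [← pow_succ, S.hP]; exact pow_le_pow_right₀ h1Q hjn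
  have hK2 : Q ^ 2 ≤ Q ^ j := pow_le_pow_right₀ h1Q hj2
  have row := S.sum_row hj
  have sie := fun C u => S.sum_ind_ee (B := B) (J := J) hj C (u := u)
  have c2 := fun u v => S.count2 (J := J) hj (u := u) (v := v)
  have c3 := fun u v w => S.count3 (J := J) hj (u := u) (v := v) (w := w)
  have g0 := S.G0 (J := J) hj
  have g1 := S.G1 (J := J) hj
  set K := Q ^ j with hK
  set f : ℝ := (#𝓕 : ℝ) with hfd
  set N : ℝ := (Fintype.card (SFlag B J) : ℝ)
  have hQK : Q ≤ K := by nlinarith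
  have hK0 : 0 < K := by linarith
  have hQ2P : Q ^ 2 * 2 ≤ P := by
    calc Q ^ 2 * 2 ≤ Q ^ 2 * Q := mul_le_mul_of_nonneg_left hQ2 (sq_nonneg _)
      _ = Q ^ 3 := by ring
      _ ≤ P := hQP
  have hQleP : Q ≤ P := by nlinarith
  have hP2 : 2 ≤ P := by linarith
  have hKP : K ≤ P := by nlinarith
  have hD1 : 0 < P ^ 2 - Q ^ 2 := by nlinarith
  have hD2 : 0 < P ^ 2 - Q ^ 4 := by nlinarith
  have hD1' : P ^ 2 / Q - Q = (P ^ 2 - Q ^ 2) / Q := by field_simp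
  have hD2' : P ^ 2 / Q ^ 2 - Q ^ 2 = (P ^ 2 - Q ^ 4) / Q ^ 2 := by field_simp
  set N2 := N1 * (K - Q) / (P ^ 2 / Q - Q) with hN2
  set N3 := N2 * (K - Q ^ 2) / (P ^ 2 / Q ^ 2 - Q ^ 2) with hN3
  have hN20 : 0 ≤ N2 := by
    rw [hN2, hD1']
    exact div_nonneg (mul_nonneg hN10.le (by linarith)) (by positivity)
  have hN30 : 0 ≤ N3 := by
    rw [hN3, hD2']
    exact div_nonneg (mul_nonneg hN20 (by linarith)) (by positivity)
  have eN2 : N2 * (P ^ 2 - Q ^ 2) = N1 * Q * (K - Q) := by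
    rw [hN2, hD1']; field_simp
  have eN3 : N3 * (P ^ 2 - Q ^ 4) = N2 * Q ^ 2 * (K - Q ^ 2) := by
    rw [hN3, hD2']; field_simp
  have i1 : N2 * P ^ 2 ≤ N1 * K * Q := by
    have a : (K - Q) * P ^ 2 ≤ K * (P ^ 2 - Q ^ 2) := by
      have : K * Q ≤ P ^ 2 := by nlinarith
      nlinarith
    have b := mul_le_mul_of_nonneg_left a (show 0 ≤ N1 * Q by positivity)
    have : (N2 * P ^ 2) * (P ^ 2 - Q ^ 2) ≤ (N1 * K * Q) * (P ^ 2 - Q ^ 2) := by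
      calc _ = (N2 * (P ^ 2 - Q ^ 2)) * P ^ 2 := by ring
        _ = N1 * Q * ((K - Q) * P ^ 2) := by rw [eN2]; ring
        _ ≤ _ := b
        _ = _ := by ring
    exact le_of_mul_le_mul_right this hD1
  have i2 : N2 * P ≤ N1 := by
    have : (N2 * P) * P ≤ N1 * P := by
      calc _ = N2 * P ^ 2 := by ring
        _ ≤ _ := i1
        _ = N1 * (K * Q) := by ring
        _ ≤ _ := mul_le_mul_of_nonneg_left hKQ hN10.le
    exact le_of_mul_le_mul_right this hP
  have i3 : N3 * P ^ 2 ≤ N2 * K * Q ^ 2 := by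
    have a : (K - Q ^ 2) * P ^ 2 ≤ K * (P ^ 2 - Q ^ 4) := by
      have : K * Q * Q ≤ P * P := mul_le_mul hKQ hQleP hQ.le hP.le
      have := mul_le_mul_of_nonneg_left this (sq_nonneg Q)
      nlinarith
    have b := mul_le_mul_of_nonneg_left a (show 0 ≤ N2 * Q ^ 2 by positivity)
    have : (N3 * P ^ 2) * (P ^ 2 - Q ^ 4) ≤ (N2 * K * Q ^ 2) * (P ^ 2 - Q ^ 4) := by
      calc _ = (N3 * (P ^ 2 - Q ^ 4)) * P ^ 2 := by ring
        _ = N2 * Q ^ 2 * ((K - Q ^ 2) * P ^ 2) := by rw [eN3]; ring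
        _ ≤ _ := b
        _ = _ := by ring
    exact le_of_mul_le_mul_right this hD2
  have i4 : N3 * P ≤ N2 * Q ^ 2 := by
    have : (N3 * P) * P ≤ (N2 * Q ^ 2) * P := by
      calc _ = N3 * P ^ 2 := by ring
        _ ≤ _ := i3
        _ = (N2 * Q ^ 2) * K := by ring
        _ ≤ _ := mul_le_mul_of_nonneg_left hKP (by positivity)
    exact le_of_mul_le_mul_right this hP
  have i5 : N3 ≤ N2 := by
    have : N3 * P ^ 2 ≤ N2 * P ^ 2 := by
      calc _ ≤ _ := i3
        _ = N2 * (K * Q * Q) := by ring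
        _ ≤ N2 * (P * P) := mul_le_mul_of_nonneg_left (mul_le_mul hKQ hQleP hQ.le hP.le) hN20
        _ = _ := by ring
    exact le_of_mul_le_mul_right this (by positivity)
  have i6 : N1 * P ≤ 2 * K * f := by
    have a : N1 * (P - 1) * (P + 1) ≤ f * (K - 1) * (P + 1) := by
      calc _ = N1 * (P ^ 2 - 1) := by ring
        _ = N * (K - 1) := hcount
        _ ≤ f * (P + 1) * (K - 1) := mul_le_mul_of_nonneg_right hbig (by linarith)
        _ = _ := by ring
    have b := le_of_mul_le_mul_right a (by linarith)
    nlinarith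
  have HN2 : ∀ u v : V, u ≠ 0 → ee B u v = 1 →
      ∑ C : SFlag B J, ind (C.space j) u * ind (C.space j) v = N2 := by
    intro u v hu hv
    have := c2 u v hu hv
    rw [hN1 u hu] at this
    rw [hN2, eq_div_iff (by rw [hD1']; positivity)]
    exact this
  have HN3 : ∀ u v w : V, u ≠ 0 → ee B u v = 1 → B u w = 0 → B v w = 0 →
      w ∉ Submodule.span F {u, v} →
      ∑ C : SFlag B J, ind (C.space j) u * (ind (C.space j) v * ind (C.space j) w) = N3 := by
    intro u v w hu hv h1 h2 h3
    have := c3 u v w hu (ee_one hv).1 (ee_one hv).2 h1 h2 h3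
    rw [HN2 u v hu hv] at this
    rw [hN3, eq_div_iff (by rw [hD2']; positivity)]
    exact this
  apply core_high (0 : V) 𝓕 (fun C v => ind (C.space j) v) (pp B) (ee B) (n:ℝ) P Q K N1 N2 f
    (by linarith) hQn hKQ hQK hN10 hN20 hf hfd i6 i1
  · rw [← S.sum_all]
    have : ∀ v : V, (if v = 0 then (0:ℝ) else 1) = 1 - (if v = 0 then 1 else 0) := by
      intro v; split_ifs <;> norm_num
    simp_rw [this]
    rw [sum_sub_distrib, sum_ite_eq' univ (0:V)]
    simp
  · intro C; exact ind_zero _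
  · intro C; exact row C
  · intro v
    by_cases hv : v = 0
    · subst hv; simp only [ind_zero, sum_const_zero]; exact hN10.le
    · exact (hN1 v hv).le
  · intro C v; exact ind_01 _ _
  · intro v w; exact ee_01 _ _
  · intro v w; exact ee_le_pp _ _
  · intro v hv; exact S.sum_ee hv
  · intro C v h; exact sie C v h
  · intro C v h
    simp_rw [mul_sub, mul_one]
    rw [sum_sub_distrib, row C, sie C v h]
    linarith
  · intro a b ha; exact S.parseval a b ha
  · intro b v hv; exact S.parseval1 b v hv
  · intro z hz hs; exact g0 N1 N2 hN1 HN2 hN20 i2 z hz hs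
  · intro v hv z hz hs; exact g1 N2 N3 HN2 HN3 hN20 hN30 i4 i5 v hv z hz hs
  · exact hS1

lemma Setup.main (S : Setup B n Q P) (hQn : 2 ^ 50 * (n:ℝ) ^ 7 ≤ Q)
    (hJ2 : ∀ j ∈ J, 2 ≤ j) (hJn : ∀ j ∈ J, j + 1 ≤ n) (hJc : #J ≤ n)
    (hne : Nonempty (SFlag B J)) (𝓕 : Finset (SFlag B J))
    (hE : ∀ C ∈ 𝓕, ∀ C' ∈ 𝓕, ¬ FlagOpp C C') :
    (#𝓕 : ℝ) * (P + 1) < (Fintype.card (SFlag B J) : ℝ) := by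
  by_contra hcon
  push Not at hcon
  have hQ := S.Q0
  have hQ2 := S.hQ2
  have hP := S.P0
  have hQP := S.QP
  have hn : (3:ℝ) ≤ n := by exact_mod_cast S.hn
  have h1n : (1:ℝ) ≤ n := by linarith
  have h1Q : 1 ≤ Q := by linarith
  have hNpos : 0 < (Fintype.card (SFlag B J) : ℝ) := by
    exact_mod_cast Fintype.card_pos
  have hf : 0 < (#𝓕 : ℝ) := by
    by_contra h
    have : (#𝓕 : ℝ) * (P + 1) ≤ 0 := mul_nonpos_of_nonpos_of_nonneg (by linarith) (by linarith)
    linarith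
  have hn7 : (n:ℝ) ^ 4 ≤ (n:ℝ) ^ 7 := pow_le_pow_right₀ h1n (by norm_num)
  have hn71 : (n:ℝ) ≤ (n:ℝ) ^ 7 := by simpa using pow_le_pow_right₀ h1n (show 1 ≤ 7 by norm_num)
  have hn0 : 0 ≤ (n:ℝ) ^ 7 := by positivity
  obtain ⟨j, hj, hS1⟩ := S.exists_level hJc (by linarith) 𝓕 hf hE
  haveI : Nontrivial V := by
    apply Module.nontrivial_of_finrank_pos (R := F)
    rw [S.dim]; have := S.hn; omega
  obtain ⟨u0, hu0⟩ := exists_ne (0 : V)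
  set N1 := ∑ C : SFlag B J, ind (C.space j) u0 with hN1d
  have hN1 : ∀ u : V, u ≠ 0 → ∑ C : SFlag B J, ind (C.space j) u = N1 :=
    fun u hu => S.const1 j hu0 hu
  have hcount := S.count1 hj hu0
  rw [← hN1d] at hcount
  have hK1 : 1 < Q ^ j := one_lt_pow₀ (by linarith) (by have := hJ2 j hj; omega)
  have hP1 : 1 < P := lt_of_lt_of_le (one_lt_pow₀ (by linarith) (by norm_num)) hQP
  have hN10 : 0 < N1 := by
    have : 0 < N1 * (P ^ 2 - 1) := by
      rw [hcount]; exact mul_pos hNpos (by linarith)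
    exact pos_of_mul_pos_left this (by nlinarith)
  have hhigh := S.high (by linarith) hj (hJ2 j hj) (hJn j hj) 𝓕 hf N1 hN1 hN10 hcount hcon hS1
  set τ := 1 / (2 ^ 23 * (n:ℝ) ^ 3) with hτ
  have hτ0 : 0 < τ := by positivity
  set X : V → ℝ := fun v => ∑ C ∈ 𝓕, ind (C.space j) v with hX
  have hHne : ∀ v, τ * N1 < X v → v ≠ 0 := by
    rintro v hv rfl
    have : X 0 = 0 := sum_eq_zero fun C _ => ind_zero _
    rw [this] at hv
    have := mul_pos hτ0 hN10
    linarith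
  have hHpos : 0 < #{v | τ * N1 < X v} := by
    have : (0:ℝ) < #{v | τ * N1 < X v} := lt_of_lt_of_le hQ hhigh
    exact_mod_cast this
  obtain ⟨u, hu⟩ := card_pos.1 hHpos
  have huX : τ * N1 < X u := (mem_filter.1 hu).2
  have hu0' := hHne u huX
  obtain ⟨u', hu'X, huu⟩ : ∃ u', τ * N1 < X u' ∧ u' ∉ Submodule.span F {u} := by
    by_contra hc
    push Not at hc
    have h1 : (#{v | τ * N1 < X v} : ℝ) ≤ ∑ v, ind (Submodule.span F {u}) v := by
      rw [← sum_boole]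
      apply sum_le_sum; intro v _
      split_ifs with h
      · simp [ind, hc v h, hHne v h]
      · exact ind_nonneg _ _
    rw [sum_ind, finrank_span_singleton hu0', pow_one, ← S.hQ] at h1
    linarith
  have hu'0 := hHne u' hu'X
  have a1 : (τ * N1) * (τ * N1) < X u * X u' :=
    mul_lt_mul'' huX hu'X (by positivity) (by positivity)
  have a2 : X u * X u' ≤ ∑ i ∈ J, ∑ C : SFlag B J, ∑ C' : SFlag B J,
      ind (C.space j) u * (ind (C'.space j) u' * nopp i C C') := by
    have b : ∀ C ∈ 𝓕, ∀ C' ∈ 𝓕, 1 ≤ ∑ i ∈ J, nopp i C C' := by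
      intro C hC C' hC'
      have := hE C hC C' hC'
      simp only [FlagOpp] at this
      push Not at this
      obtain ⟨i, hi, hne⟩ := this
      calc (1:ℝ) = nopp i C C' := by simp only [nopp]; rw [if_neg hne]
        _ ≤ _ := single_le_sum (f := fun j => nopp j C C') (fun j _ => nopp_nonneg j C C') hi
    have nn : ∀ i (C C' : SFlag B J), 0 ≤ ind (C.space j) u * (ind (C'.space j) u' * nopp i C C') :=
      fun i C C' => mul_nonneg (ind_nonneg _ _) (mul_nonneg (ind_nonneg _ _) (nopp_nonneg _ _ _))
    calc X u * X u' = ∑ C ∈ 𝓕, ∑ C' ∈ 𝓕, ind (C.space j) u * ind (C'.space j) u' := by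
          rw [hX, sum_mul_sum]
      _ ≤ ∑ C ∈ 𝓕, ∑ C' ∈ 𝓕, ∑ i ∈ J, ind (C.space j) u * (ind (C'.space j) u' * nopp i C C') := by
          apply sum_le_sum; intro C hC
          apply sum_le_sum; intro C' hC'
          rw [← mul_sum, ← mul_sum]
          apply mul_le_mul_of_nonneg_left _ (ind_nonneg _ _)
          exact le_mul_of_one_le_right (ind_nonneg _ _) (b C hC C' hC')
      _ ≤ ∑ C ∈ 𝓕, ∑ C' : SFlag B J, ∑ i ∈ J,
            ind (C.space j) u * (ind (C'.space j) u' * nopp i C C') := by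
          apply sum_le_sum; intro C hC
          apply sum_le_sum_of_subset_of_nonneg (subset_univ _)
          intro C' _ _
          exact sum_nonneg fun i _ => nn i C C'
      _ ≤ ∑ C : SFlag B J, ∑ C' : SFlag B J, ∑ i ∈ J,
            ind (C.space j) u * (ind (C'.space j) u' * nopp i C C') := by
          apply sum_le_sum_of_subset_of_nonneg (subset_univ _)
          intro C _ _
          exact sum_nonneg fun C' _ => sum_nonneg fun i _ => nn i C C'
      _ = _ := by
          simp_rw [sum_comm (s := univ) (t := J)]
  have a3 : (∑ i ∈ J, ∑ C : SFlag B J, ∑ C' : SFlag B J,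
      ind (C.space j) u * (ind (C'.space j) u' * nopp i C C')) * Q ≤ n * (16 * N1 ^ 2) := by
    rw [sum_mul]
    calc _ ≤ ∑ i ∈ J, 16 * N1 ^ 2 := by
          apply sum_le_sum; intro i hi
          have hiP : Q ^ i * Q ≤ P := by
            rw [← pow_succ, S.hP]; exact pow_le_pow_right₀ h1Q (hJn i hi)
          have := S.step5 hi hj (hJ2 i hi) hiP hu0' hu'0 huu
          rwa [hN1 u hu0'] at this
      _ = #J * (16 * N1 ^ 2) := by rw [sum_const, nsmul_eq_mul]
      _ ≤ _ := mul_le_mul_of_nonneg_right (by exact_mod_cast hJc) (by positivity)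
  have a4 : (τ * N1) * (τ * N1) * Q < n * (16 * N1 ^ 2) := by
    calc _ < X u * X u' * Q := mul_lt_mul_of_pos_right a1 hQ
      _ ≤ _ := mul_le_mul_of_nonneg_right a2 hQ.le
      _ ≤ _ := a3
  have a5 : n * (16 * N1 ^ 2) ≤ (τ * N1) * (τ * N1) * Q := by
    have e : n * (16 * N1 ^ 2) = (τ * N1) * (τ * N1) * (2 ^ 50 * (n:ℝ) ^ 7) := by
      rw [hτ]; field_simp; norm_num
    rw [e]
    exact mul_le_mul_of_nonneg_left hQn (by positivity)
  linarith
end D3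

/-- For large `q`, if `J ⊆ [n]` is nonempty with `1 ∉ J` and `n ∉ J`,
then every EKR-set of flags of type `J` has size strictly below the ratio bound
`N_J/(q^n+1)`. -/
theorem stmt_2 (n : ℕ) (hn : 3 ≤ n) :
    ∃ q₀ : ℕ, ∀ (F V : Type) [Field F] [Fintype F] [AddCommGroup V] [Module F V],
      ∀ q : ℕ, Fintype.card F = q → q₀ ≤ q →
      ∀ B : V →ₗ[F] V →ₗ[F] F, IsAltForm B → NondegForm B →
      FiniteDimensional F V → Module.finrank F V = 2 * n →
      ∀ J : Finset ℕ, J ⊆ Finset.Icc 1 n → J.Nonempty → 1 ∉ J → n ∉ J →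
      ∀ 𝓕 : Set (SFlag B J),
        IsEKRFlags 𝓕 →
        (𝓕.ncard : ℝ) < (Nat.card (SFlag B J) : ℝ) / ((q : ℝ) ^ n + 1) := by
  refine ⟨2 ^ 50 * n ^ 7, ?_⟩
  intro F V _ _ _ _ q hq hq0 B hB hN hfd hdim J hJ _ h1 hnJ 𝓕 hE
  haveI : Finite V := Module.finite_of_finite F
  haveI : Fintype V := Fintype.ofFinite V
  haveI : Finite (SFlag B J) := finite_SFlag B J
  haveI : Fintype (SFlag B J) := Fintype.ofFinite _
  have hq' : (2:ℝ) ^ 50 * (n:ℝ) ^ 7 ≤ (q:ℝ) := by exact_mod_cast hq0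
  have hn' : (1:ℝ) ≤ n := by exact_mod_cast (by omega : 1 ≤ n)
  have hn7 : (1:ℝ) ≤ (n:ℝ) ^ 7 := one_le_pow₀ hn'
  have S : Setup B n (q:ℝ) ((q:ℝ) ^ n) :=
    ⟨hB, hN, hdim, hn, by rw [hq], rfl, by linarith⟩
  have hmem : ∀ j ∈ J, 1 ≤ j ∧ j ≤ n := fun j hj => Finset.mem_Icc.1 (hJ hj)
  have hm := S.main hq'
    (fun j hj => by
      have := hmem j hj
      have : j ≠ 1 := fun h => h1 (h ▸ hj)
      omega)
    (fun j hj => by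
      have := hmem j hj
      have : j ≠ n := fun h => hnJ (h ▸ hj)
      omega)
    (by simpa using Finset.card_le_card hJ)
    (nonempty_SFlag hB hN n hdim J hJ) 𝓕.toFinset
    (fun C hC C' hC' => hE C (by simpa using hC) C' (by simpa using hC'))
  rw [lt_div_iff₀ (by positivity), Set.ncard_eq_toFinset_card', Nat.card_eq_fintype_card]
  exact hm
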